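/- Let the setting be type A_N or type B_N and let (i_t,k_t), 1 ≤ t ≤ T, be a snake. For any two non-overlapping tuples (p_1,…,p_T) and (p′_1,…,p′_T) in P̄_{(i_t,k_t)}, the tuple (p_1,…,p_T) can be obtained from (p′_1,…,p′_T) by a finite sequence of raising and lowering moves at points of W such that no point of W occurs in the sequence both as the site of a raising move and as the site of a lowering move, and such that every intermediate tuple is non-overlapping. -/

import Mathlib

namespace Paper

/-- The ambient setting: type `A N` (with `N ≥ 1`) or type `B N ε`
(with `N ≥ 2` and `0 < ε < 1/2`). -/
inductive Setting where
  | A (N : ℕ)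
  | B (N : ℕ) (ε : ℝ)

namespace Setting

/-- The rank `N`. -/
def N : Setting → ℕ
  | A n => n
  | B n _ => n

/-- Validity of the parameters of the setting. -/
def valid : Setting → Prop
  | A n => 1 ≤ n
  | B n ε => 2 ≤ n ∧ 0 < ε ∧ ε < 1 / 2

end Setting

/-- The numbers `r_i` : in type A all equal `1`; in type B, `r_N = 1` and `r_i = 2` for `i < N`. -/
def rr : Setting → ℕ → ℕ
  | .A _, _ => 1
  | .B n _, j => if j = n then 1 else 2

/-- The set `X` in type `A_N`. -/
def XA (n : ℕ) : Set (ℕ × ℤ) :=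
  {ik | 1 ≤ ik.1 ∧ ik.1 ≤ n ∧ ((ik.1 : ℤ) - ik.2) % 2 = 1}

/-- The set `X` in type `B_N`. -/
def XB (n : ℕ) : Set (ℕ × ℤ) :=
  {ik | (ik.1 = n ∧ ik.2 % 2 = 1) ∨ (1 ≤ ik.1 ∧ ik.1 < n ∧ ik.2 % 2 = 0)}

/-- The set `X ⊆ I × ℤ`. -/
def X : Setting → Set (ℕ × ℤ)
  | .A n => XA n
  | .B n _ => XB n

/-- The set `W = {(i,k) : (i, k - r_i) ∈ X}`. -/
def W (S : Setting) : Set (ℕ × ℤ) :=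
  {ik | (ik.1, ik.2 - (rr S ik.1 : ℤ)) ∈ X S}

/-- The `r`-th point of a path (a finite list of points of the plane). -/
def pt (p : List (ℝ × ℝ)) (r : ℕ) : ℝ × ℝ := p.getD r (0, 0)

/-- The set of paths `𝒫_{i,k}` in type `A_N`. -/
def pathsA (n : ℕ) (i : ℕ) (k : ℤ) : Set (List (ℝ × ℝ)) :=
  {p | p.length = n + 2 ∧
    (∀ r, r < n + 2 → (pt p r).1 = (r : ℝ)) ∧
    (pt p 0).2 = (i : ℝ) + (k : ℝ) ∧
    (pt p (n + 1)).2 = (n : ℝ) + 1 - (i : ℝ) + (k : ℝ) ∧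
    (∀ r, r ≤ n → (pt p (r + 1)).2 - (pt p r).2 = 1 ∨ (pt p (r + 1)).2 - (pt p r).2 = -1)}

/-- The set of paths `𝒫_{N,ℓ}` in type `B_N`. -/
def pathsBspin (n : ℕ) (ε : ℝ) (l : ℤ) : Set (List (ℝ × ℝ)) :=
  {p | p.length = n + 1 ∧
    (if l % 4 = 3 then ∀ r, r < n → (pt p r).1 = 2 * (r : ℝ)
     else ∀ r, r < n → (pt p r).1 = 4 * (n : ℝ) - 2 - 2 * (r : ℝ)) ∧
    (pt p n).1 = 2 * (n : ℝ) - 1 ∧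
    (pt p 0).2 = (l : ℝ) + 2 * (n : ℝ) - 1 ∧
    (∀ r, r + 2 ≤ n → (pt p (r + 1)).2 - (pt p r).2 = 2 ∨ (pt p (r + 1)).2 - (pt p r).2 = -2) ∧
    ((pt p n).2 - (pt p (n - 1)).2 = 1 + ε ∨ (pt p n).2 - (pt p (n - 1)).2 = -(1 + ε))}

/-- The set of paths `𝒫_{i,k}` in type `B_N`. -/
def pathsB (n : ℕ) (ε : ℝ) (i : ℕ) (k : ℤ) : Set (List (ℝ × ℝ)) :=
  if i = n then pathsBspin n ε k
  else {p | ∃ a b : List (ℝ × ℝ),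
    a ∈ pathsBspin n ε (k - (2 * (n : ℤ) - 2 * (i : ℤ) - 1)) ∧
    b ∈ pathsBspin n ε (k + (2 * (n : ℤ) - 2 * (i : ℤ) - 1)) ∧
    p = a ++ b.reverse ∧
    (pt a n).1 = (pt b n).1 ∧ 0 < (pt a n).2 - (pt b n).2}

/-- The set of paths `𝒫_{i,k}`. -/
def P : Setting → ℕ → ℤ → Set (List (ℝ × ℝ))
  | .A n => pathsA n
  | .B n ε => pathsB n ε

/-- The map `ι : X → ℤ × ℤ` of type `B_N`. -/
def iotaB (n : ℕ) (ik : ℕ × ℤ) : ℤ × ℤ :=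
  if ik.1 = n then (2 * (n : ℤ) - 1, ik.2)
  else if (2 * (n : ℤ) + ik.2 - 2 * (ik.1 : ℤ)) % 4 = 2 then (2 * (ik.1 : ℤ), ik.2)
  else (4 * (n : ℤ) - 2 - 2 * (ik.1 : ℤ), ik.2)

/-- The corners of a path: `Cp S p true` is the set `C_{p,+}` of upper corners, and
`Cp S p false` is the set `C_{p,-}` of lower corners. -/
def Cp (S : Setting) (p : List (ℝ × ℝ)) (up : Bool) : Set (ℕ × ℤ) :=
  match S with
  | .A n =>
    {jl | 1 ≤ jl.1 ∧ jl.1 ≤ n ∧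
      pt p jl.1 = ((jl.1 : ℝ), (jl.2 : ℝ)) ∧
      (pt p (jl.1 - 1)).2 = (jl.2 : ℝ) + (if up then 1 else -1) ∧
      (pt p (jl.1 + 1)).2 = (jl.2 : ℝ) + (if up then 1 else -1)}
  | .B n ε =>
    {jl | jl ∈ XB n ∧
      ((∃ r : ℕ, 1 ≤ r ∧ r + 1 < p.length ∧
          pt p r = (((iotaB n jl).1 : ℝ), ((iotaB n jl).2 : ℝ)) ∧
          (iotaB n jl).1 ≠ 0 ∧ (iotaB n jl).1 ≠ 2 * (n : ℤ) - 1 ∧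
          (iotaB n jl).1 ≠ 4 * (n : ℤ) - 2 ∧
          (if up then (pt p r).2 < (pt p (r - 1)).2 ∧ (pt p r).2 < (pt p (r + 1)).2
           else (pt p (r - 1)).2 < (pt p r).2 ∧ (pt p (r + 1)).2 < (pt p r).2))
       ∨ (jl.1 = n ∧
          (if up then (2 * (n : ℝ) - 1, (jl.2 : ℝ) - ε) ∈ p ∧ (2 * (n : ℝ) - 1, (jl.2 : ℝ) + ε) ∉ p
           else (2 * (n : ℝ) - 1, (jl.2 : ℝ) + ε) ∈ p ∧ (2 * (n : ℝ) - 1, (jl.2 : ℝ) - ε) ∉ p)))}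

/-- `p'` is obtained from `p` by replacing the point `q` by the point `q'`. -/
def Replace1 (p p' : List (ℝ × ℝ)) (q q' : ℝ × ℝ) : Prop :=
  ∃ r : ℕ, r < p.length ∧ pt p r = q ∧ p'.length = p.length ∧ pt p' r = q' ∧
    ∀ s, s < p.length → s ≠ r → pt p' s = pt p s

/-- `p'` is obtained from `p` by replacing the point `q1` by `q1'` and the point `q2` by `q2'`. -/
def Replace2 (p p' : List (ℝ × ℝ)) (q1 q1' q2 q2' : ℝ × ℝ) : Prop :=
  ∃ r s : ℕ, r < p.length ∧ s < p.length ∧ r ≠ s ∧ pt p r = q1 ∧ pt p s = q2 ∧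
    p'.length = p.length ∧ pt p' r = q1' ∧ pt p' s = q2' ∧
    ∀ u, u < p.length → u ≠ r → u ≠ s → pt p' u = pt p u

/-- The path `p` can be lowered at `(j, l)`: `(j, l - r_j) ∈ C_{p,+}` and
`(j, l + r_j) ∉ C_{p,+}`. -/
def CanLower (S : Setting) (p : List (ℝ × ℝ)) (j : ℕ) (l : ℤ) : Prop :=
  (j, l - (rr S j : ℤ)) ∈ Cp S p true ∧ (j, l + (rr S j : ℤ)) ∉ Cp S p true

/-- `p'` is the result of the lowering move at `(j,l)` applied to the path `p ∈ 𝒫_{i,k}`;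
written `p' = p 𝒜_{j,l}⁻¹`. -/
def LoweredTo (S : Setting) (i : ℕ) (k : ℤ) (j : ℕ) (l : ℤ)
    (p p' : List (ℝ × ℝ)) : Prop :=
  p ∈ P S i k ∧ p' ∈ P S i k ∧ CanLower S p j l ∧
  (match S with
   | .A _ => Replace1 p p' ((j : ℝ), (l : ℝ) - 1) ((j : ℝ), (l : ℝ) + 1)
   | .B n ε =>
     if j = n then
       Replace1 p p' (2 * (n : ℝ) - 1, (l : ℝ) - 1 - ε) (2 * (n : ℝ) - 1, (l : ℝ) + 1 + ε)
     else if j = n - 1 then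
       Replace2 p p'
         (((iotaB n (j, l - 2)).1 : ℝ), (l : ℝ) - 2) (((iotaB n (j, l - 2)).1 : ℝ), (l : ℝ) + 2)
         (2 * (n : ℝ) - 1, (l : ℝ) - 1 + ε) (2 * (n : ℝ) - 1, (l : ℝ) + 1 - ε)
     else
       Replace1 p p'
         (((iotaB n (j, l - 2)).1 : ℝ), (l : ℝ) - 2) (((iotaB n (j, l - 2)).1 : ℝ), (l : ℝ) + 2))

/-- The path `p` can be raised at `(j,l)`: it is of the form `p' 𝒜_{j,l}⁻¹`. -/
def CanRaise (S : Setting) (i : ℕ) (k : ℤ) (p : List (ℝ × ℝ)) (j : ℕ) (l : ℤ) : Prop :=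
  ∃ p', LoweredTo S i k j l p' p

/-- The monomial group `ℳ`, realised as exponent functions: the free abelian group on the
symbols `Y_{i,k}`, `(i,k) ∈ X`, is identified with finitely supported functions `(ℕ × ℤ) → ℤ`,
written additively. -/
def Y (x : ℕ × ℤ) : (ℕ × ℤ) → ℤ := fun z => if z = x then 1 else 0

noncomputable def ind (s : Prop) : ℤ := @ite ℤ s (Classical.propDecidable s) 1 0

/-- The monomial `m(p)` of a path: `∏ Y_{j,l}` over upper corners times `∏ Y_{j,l}⁻¹`
over lower corners. -/
noncomputable def mon (S : Setting) (p : List (ℝ × ℝ)) : (ℕ × ℤ) → ℤ :=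
  fun x => ind (x ∈ Cp S p true) - ind (x ∈ Cp S p false)

/-- The monomials `A_{j,l}`, with the conventions `Y_{0,·} = Y_{N+1,·} = 1`. -/
def Amon (S : Setting) (j : ℕ) (l : ℤ) : (ℕ × ℤ) → ℤ :=
  match S with
  | .A n =>
      Y (j, l + 1) + Y (j, l - 1) - (if j = 1 then 0 else Y (j - 1, l))
        - (if j = n then 0 else Y (j + 1, l))
  | .B n _ =>
      if j = n then Y (n, l + 1) + Y (n, l - 1) - Y (n - 1, l)
      else if j = n - 1 then
        Y (n - 1, l + 2) + Y (n - 1, l - 2) - (if j = 1 then 0 else Y (n - 2, l))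
          - Y (n, l + 1) - Y (n, l - 1)
      else
        Y (j, l + 2) + Y (j, l - 2) - (if j = 1 then 0 else Y (j - 1, l)) - Y (j + 1, l)

/-- A monomial is dominant iff all its exponents are nonnegative. -/
def Dominant (m : (ℕ × ℤ) → ℤ) : Prop := ∀ x, 0 ≤ m x

/-- A monomial is anti-dominant iff all its exponents are nonpositive. -/
def AntiDominant (m : (ℕ × ℤ) → ℤ) : Prop := ∀ x, m x ≤ 0

/-- `(i',k')` is in snake position with respect to `(i,k)`. -/
def SnakePos : Setting → ℕ × ℤ → ℕ × ℤ → Prop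
  | .A _, ik, ik' => |(ik'.1 : ℤ) - (ik.1 : ℤ)| + 2 ≤ ik'.2 - ik.2
  | .B n _, ik, ik' =>
      if ik.1 = n ∧ ik'.1 = n then
        2 ≤ ik'.2 - ik.2 ∧ (ik'.2 - ik.2) % 4 = 2
      else if ik.1 = n ∨ ik'.1 = n then
        2 * |(ik'.1 : ℤ) - (ik.1 : ℤ)| + 3 ≤ ik'.2 - ik.2 ∧
          (ik'.2 - ik.2) % 4 = (2 * |(ik'.1 : ℤ) - (ik.1 : ℤ)| - 1) % 4
      else
        2 * |(ik'.1 : ℤ) - (ik.1 : ℤ)| + 4 ≤ ik'.2 - ik.2 ∧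
          (ik'.2 - ik.2) % 4 = (2 * |(ik'.1 : ℤ) - (ik.1 : ℤ)|) % 4

/-- A snake: a sequence of points of `X`, each in snake position w.r.t. the previous one. -/
def IsSnake (S : Setting) {T : ℕ} (w : Fin T → ℕ × ℤ) : Prop :=
  (∀ t, w t ∈ X S) ∧
  ∀ (t : Fin T) (h : (t : ℕ) + 1 < T), SnakePos S (w t) (w ⟨(t : ℕ) + 1, h⟩)

/-- `p` is strictly above `p'`. -/
def StrictlyAbove (p p' : List (ℝ × ℝ)) : Prop :=
  ∀ a ∈ p, ∀ b ∈ p', a.1 = b.1 → a.2 < b.2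

/-- A tuple of paths is non-overlapping. -/
def NonOverlapping {T : ℕ} (ps : Fin T → List (ℝ × ℝ)) : Prop :=
  ∀ s t : Fin T, s < t → StrictlyAbove (ps s) (ps t)

/-- The set `𝒫̄` of non-overlapping tuples of paths attached to a snake. -/
def PBar (S : Setting) {T : ℕ} (w : Fin T → ℕ × ℤ) : Set (Fin T → List (ℝ × ℝ)) :=
  {ps | (∀ t, ps t ∈ P S (w t).1 (w t).2) ∧ NonOverlapping ps}

/-- The product `∏_t m(p_t)` of the monomials of a tuple of paths. -/
noncomputable def tmon (S : Setting) {T : ℕ} (ps : Fin T → List (ℝ × ℝ)) : (ℕ × ℤ) → ℤ :=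
  ∑ t, mon S (ps t)

/-- Lowering move at `jl` on a tuple of paths: one component is lowered, the others
are unchanged. -/
def TLoweredTo (S : Setting) {T : ℕ} (w : Fin T → ℕ × ℤ) (jl : ℕ × ℤ)
    (ps ps' : Fin T → List (ℝ × ℝ)) : Prop :=
  ∃ t, LoweredTo S (w t).1 (w t).2 jl.1 jl.2 (ps t) (ps' t) ∧ ∀ s, s ≠ t → ps' s = ps s

/-- Sequences of raising/lowering moves on a single path; the list records, for each move,
whether it was a lowering move (`true`) or a raising move (`false`), and its site. -/
inductive MoveSeq (S : Setting) (i : ℕ) (k : ℤ) :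
    List (ℝ × ℝ) → List (ℝ × ℝ) → List (Bool × (ℕ × ℤ)) → Prop where
  | nil (p : List (ℝ × ℝ)) : MoveSeq S i k p p []
  | lower {p q r : List (ℝ × ℝ)} {jl : ℕ × ℤ} {ms : List (Bool × (ℕ × ℤ))} :
      jl ∈ W S → LoweredTo S i k jl.1 jl.2 p q → MoveSeq S i k q r ms →
      MoveSeq S i k p r ((true, jl) :: ms)
  | raise {p q r : List (ℝ × ℝ)} {jl : ℕ × ℤ} {ms : List (Bool × (ℕ × ℤ))} :
      jl ∈ W S → LoweredTo S i k jl.1 jl.2 q p → MoveSeq S i k q r ms →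
      MoveSeq S i k p r ((false, jl) :: ms)

/-- Sequences of raising/lowering moves on tuples of paths, all of whose intermediate
tuples are non-overlapping. -/
inductive TMoveSeq (S : Setting) {T : ℕ} (w : Fin T → ℕ × ℤ) :
    (Fin T → List (ℝ × ℝ)) → (Fin T → List (ℝ × ℝ)) → List (Bool × (ℕ × ℤ)) → Prop where
  | nil (ps : Fin T → List (ℝ × ℝ)) : TMoveSeq S w ps ps []
  | lower {ps qs rs : Fin T → List (ℝ × ℝ)} {jl : ℕ × ℤ} {ms : List (Bool × (ℕ × ℤ))} :
      jl ∈ W S → TLoweredTo S w jl ps qs → NonOverlapping qs →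
      TMoveSeq S w qs rs ms → TMoveSeq S w ps rs ((true, jl) :: ms)
  | raise {ps qs rs : Fin T → List (ℝ × ℝ)} {jl : ℕ × ℤ} {ms : List (Bool × (ℕ × ℤ))} :
      jl ∈ W S → TLoweredTo S w jl qs ps → NonOverlapping qs →
      TMoveSeq S w qs rs ms → TMoveSeq S w ps rs ((false, jl) :: ms)

/-- Sequences of lowering moves on tuples of paths, all of whose intermediate tuples
are non-overlapping; the list records the sites, in order. -/
inductive TLowerSeq (S : Setting) {T : ℕ} (w : Fin T → ℕ × ℤ) :
    (Fin T → List (ℝ × ℝ)) → (Fin T → List (ℝ × ℝ)) → List (ℕ × ℤ) → Prop where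
  | nil (ps : Fin T → List (ℝ × ℝ)) : TLowerSeq S w ps ps []
  | cons {ps qs rs : Fin T → List (ℝ × ℝ)} {jl : ℕ × ℤ} {ms : List (ℕ × ℤ)} :
      jl ∈ W S → TLoweredTo S w jl ps qs → NonOverlapping qs →
      TLowerSeq S w qs rs ms → TLowerSeq S w ps rs (jl :: ms)

/-- Weak order on paths with the same x-coordinates: `p` is weakly above `p'`. -/
def WeaklyAbove (p p' : List (ℝ × ℝ)) : Prop :=
  p.length = p'.length ∧ ∀ r, r < p.length → (pt p r).2 ≤ (pt p' r).2

/-- `p` is weakly below `p'`. -/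
def WeaklyBelow (p p' : List (ℝ × ℝ)) : Prop :=
  p.length = p'.length ∧ ∀ r, r < p.length → (pt p' r).2 ≤ (pt p r).2

/-- The path `top(p, p')`. -/
def topPath (p p' : List (ℝ × ℝ)) : List (ℝ × ℝ) :=
  List.zipWith (fun a b => (a.1, min a.2 b.2)) p p'

/-- The distinguished point contained in the highest path `p⁺_{i,k}`. -/
def highPoint : Setting → ℕ → ℤ → ℝ × ℝ
  | .A _, i, k => ((i : ℝ), (k : ℝ))
  | .B n ε, i, k =>
      if i = n then (2 * (n : ℝ) - 1, (k : ℝ) - ε)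
      else (((iotaB n (i, k)).1 : ℝ), ((iotaB n (i, k)).2 : ℝ))

/-- The distinguished point contained in the lowest path `p⁻_{i,k}`. -/
def lowPoint : Setting → ℕ → ℤ → ℝ × ℝ
  | .A n, i, k => ((n : ℝ) + 1 - (i : ℝ), (k : ℝ) + (n : ℝ) + 1)
  | .B n ε, i, k =>
      if i = n then (2 * (n : ℝ) - 1, (k : ℝ) + 4 * (n : ℝ) - 2 + ε)
      else (((iotaB n (i, k + 4 * (n : ℤ) - 2)).1 : ℝ),
            ((iotaB n (i, k + 4 * (n : ℤ) - 2)).2 : ℝ))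

/-- The highest path `p⁺_{i,k}` : the path of `𝒫_{i,k}` with no lower corners. -/
noncomputable def highestPath (S : Setting) (i : ℕ) (k : ℤ) : List (ℝ × ℝ) :=
  Classical.epsilon fun p => p ∈ P S i k ∧ Cp S p false = ∅

/-- The lowest path `p⁻_{i,k}` : the path of `𝒫_{i,k}` with no upper corners. -/
noncomputable def lowestPath (S : Setting) (i : ℕ) (k : ℤ) : List (ℝ × ℝ) :=
  Classical.epsilon fun p => p ∈ P S i k ∧ Cp S p true = ∅


/-! ### Lists of points -/

theorem pt_mem {p : List (ℝ × ℝ)} {r : ℕ} (h : r < p.length) : pt p r ∈ p := by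
  unfold pt
  rw [List.getD_eq_getElem _ _ h]
  exact List.getElem_mem h

theorem mem_pt {p : List (ℝ × ℝ)} {a : ℝ × ℝ} (h : a ∈ p) : ∃ r, r < p.length ∧ pt p r = a := by
  obtain ⟨r, hr, rfl⟩ := List.getElem_of_mem h
  exact ⟨r, hr, by unfold pt; rw [List.getD_eq_getElem _ _ hr]⟩

theorem pt_ext {p q : List (ℝ × ℝ)} (hl : p.length = q.length)
    (h : ∀ r, r < p.length → pt p r = pt q r) : p = q := by
  apply List.ext_getElem hl
  intro r h1 h2
  have := h r h1
  unfold pt at this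
  rwa [List.getD_eq_getElem _ _ h1, List.getD_eq_getElem _ _ h2] at this

theorem pt_set {p : List (ℝ × ℝ)} {r : ℕ} {v : ℝ × ℝ} (hr : r < p.length) (s : ℕ) :
    pt (p.set r v) s = if s = r then v else pt p s := by
  unfold pt
  by_cases h : s = r
  · subst h
    simp [List.getD, hr]
  · have h' : r ≠ s := fun e => h e.symm
    simp [List.getD, h, h']

theorem pt_top {p q : List (ℝ × ℝ)} (hl : p.length = q.length) {r : ℕ} (hr : r < p.length) :
    pt (topPath p q) r = ((pt p r).1, min (pt p r).2 (pt q r).2) := by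
  unfold pt topPath
  have h2 : r < q.length := hl ▸ hr
  rw [List.getD_eq_getElem _ _ (by simp; omega), List.getD_eq_getElem _ _ hr,
    List.getD_eq_getElem _ _ h2]
  simp

theorem length_top {p q : List (ℝ × ℝ)} (hl : p.length = q.length) :
    (topPath p q).length = p.length := by
  simp [topPath, hl]

theorem pt_append_left {a b : List (ℝ × ℝ)} {r : ℕ} (h : r < a.length) :
    pt (a ++ b) r = pt a r := by
  unfold pt
  rw [List.getD_append _ _ _ _ h]

theorem pt_append_rev {a b : List (ℝ × ℝ)} {r : ℕ} (h : r < b.length) :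
    pt (a ++ b.reverse) (a.length + b.length - 1 - r) = pt b r := by
  unfold pt
  rw [List.getD_append_right _ _ _ _ (by omega),
    List.getD_eq_getElem _ _ (by simp; omega), List.getD_eq_getElem _ _ h, List.getElem_reverse]
  congr 1
  omega

/-! ### Sites -/

noncomputable def col (S : Setting) (jl : ℕ × ℤ) : ℝ :=
  match S with
  | .A _ => (jl.1 : ℝ)
  | .B n _ => if jl.1 = n then 2 * (n : ℝ) - 1 else ((iotaB n (jl.1, jl.2 - 2)).1 : ℝ)

noncomputable def lo (S : Setting) (jl : ℕ × ℤ) : ℝ :=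
  match S with
  | .A _ => (jl.2 : ℝ) - 1
  | .B n ε => if jl.1 = n then (jl.2 : ℝ) - 1 - ε else (jl.2 : ℝ) - 2

noncomputable def hi (S : Setting) (jl : ℕ × ℤ) : ℝ :=
  match S with
  | .A _ => (jl.2 : ℝ) + 1
  | .B n ε => if jl.1 = n then (jl.2 : ℝ) + 1 + ε else (jl.2 : ℝ) + 2

theorem lo_hi {S : Setting} (hS : S.valid) (jl : ℕ × ℤ) : lo S jl + 1 ≤ hi S jl := by
  cases S with
  | A n => simp only [lo, hi]; linarith
  | B n ε =>
    obtain ⟨_, h1, _⟩ := hS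
    simp only [lo, hi]
    split_ifs <;> linarith

theorem rep1_info {q q1 : List (ℝ × ℝ)} {a b : ℝ × ℝ} (h : Replace1 q q1 a b) (hab : a.2 ≤ b.2) :
    WeaklyAbove q q1 ∧ ∃ r, r < q.length ∧ pt q r = a ∧ pt q1 r = b := by
  obtain ⟨r, hr, h1, hl, h2, h3⟩ := h
  refine ⟨⟨hl.symm, fun s hs => ?_⟩, r, hr, h1, h2⟩
  by_cases e : s = r
  · subst e; rw [h1, h2]; exact hab
  · rw [h3 s hs e]

theorem rep2_info {q q1 : List (ℝ × ℝ)} {a b c d : ℝ × ℝ} (h : Replace2 q q1 a b c d)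
    (hab : a.2 ≤ b.2) (hcd : c.2 ≤ d.2) :
    WeaklyAbove q q1 ∧ ∃ r, r < q.length ∧ pt q r = a ∧ pt q1 r = b := by
  obtain ⟨r, u, hr, hu, hne, h1, h1', hl, h2, h2', h3⟩ := h
  refine ⟨⟨hl.symm, fun s hs => ?_⟩, r, hr, h1, h2⟩
  by_cases e : s = r
  · subst e; rw [h1, h2]; exact hab
  · by_cases e' : s = u
    · subst e'; rw [h1', h2']; exact hcd
    · rw [h3 s hs e e']

theorem lowered_info {S : Setting} (hS : S.valid) {i : ℕ} {k : ℤ} {j : ℕ} {l : ℤ}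
    {q q1 : List (ℝ × ℝ)} (h : LoweredTo S i k j l q q1) :
    WeaklyAbove q q1 ∧ ∃ r, r < q.length ∧ pt q r = (col S (j, l), lo S (j, l)) ∧
      pt q1 r = (col S (j, l), hi S (j, l)) := by
  obtain ⟨_, _, _, h⟩ := h
  cases S with
  | A n =>
    simp only at h
    exact rep1_info h (by simp only [lo, hi]; linarith)
  | B n ε =>
    obtain ⟨_, h1, h2⟩ := hS
    simp only at h
    simp only [col, lo, hi]
    split_ifs at h with e e'
    · simp only [e, if_true]
      exact rep1_info h (by simp only; linarith)
    · simp only [e, if_false]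
      exact rep2_info h (by simp only; linarith) (by simp only; linarith)
    · simp only [e, if_false]
      exact rep1_info h (by simp only; linarith)

/-! ### Generic framework -/

noncomputable def hsum (p : List (ℝ × ℝ)) : ℝ := ∑ r ∈ Finset.range p.length, (pt p r).2

theorem hsum_lowered {S : Setting} (hS : S.valid) {i : ℕ} {k : ℤ} {j : ℕ} {l : ℤ}
    {q q1 : List (ℝ × ℝ)} (h : LoweredTo S i k j l q q1) : hsum q + 1 ≤ hsum q1 := by
  obtain ⟨⟨hl, hw⟩, r, hr, h1, h2⟩ := lowered_info hS h
  unfold hsum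
  rw [← hl]
  have hr' : r ∈ Finset.range q.length := Finset.mem_range.2 hr
  rw [← Finset.add_sum_erase _ _ hr', ← Finset.add_sum_erase _ (fun r => (pt q1 r).2) hr']
  have := Finset.sum_le_sum (s := (Finset.range q.length).erase r)
    (f := fun r => (pt q r).2) (g := fun r => (pt q1 r).2)
    (fun s hs => hw s (Finset.mem_range.1 (Finset.mem_of_mem_erase hs)))
  have h3 := lo_hi hS (j, l)
  rw [h1, h2]
  simp only at *
  linarith

theorem hsum_mono {q p : List (ℝ × ℝ)} (h : WeaklyAbove q p) : hsum q ≤ hsum p := by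
  unfold hsum
  rw [← h.1]
  exact Finset.sum_le_sum fun s hs => h.2 s (Finset.mem_range.1 hs)

/-- The facts about the sets of paths which are needed. -/
structure Good (S : Setting) (i : ℕ) (k : ℤ) : Prop where
  len : ∀ p ∈ P S i k, ∀ q ∈ P S i k, p.length = q.length
  xs : ∀ p ∈ P S i k, ∀ q ∈ P S i k, ∀ r, r < p.length → (pt p r).1 = (pt q r).1
  ord : ∀ p ∈ P S i k, ∀ r s, r < s → s < p.length → (pt p r).1 = (pt p s).1 →
    (pt p s).2 < (pt p r).2
  meet : ∀ p ∈ P S i k, ∀ q ∈ P S i k, topPath p q ∈ P S i k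
  step : ∀ q ∈ P S i k, ∀ p ∈ P S i k, WeaklyAbove q p → q ≠ p →
    ∃ q1 j l, (j, l) ∈ W S ∧ LoweredTo S i k j l q q1 ∧ WeaklyAbove q1 p

theorem TMoveSeq.trans {S : Setting} {T : ℕ} {w : Fin T → ℕ × ℤ}
    {ps qs rs : Fin T → List (ℝ × ℝ)} {ms ms' : List (Bool × (ℕ × ℤ))}
    (h : TMoveSeq S w ps qs ms) (h' : TMoveSeq S w qs rs ms') :
    TMoveSeq S w ps rs (ms ++ ms') := by
  induction h with
  | nil => exact h'
  | lower a b c _ ih => exact .lower a b c (ih h')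
  | raise a b c _ ih => exact .raise a b c (ih h')

theorem tstep {S : Setting} (hS : S.valid) {T : ℕ} {w : Fin T → ℕ × ℤ}
    (hg : ∀ t, Good S (w t).1 (w t).2) {qs ps : Fin T → List (ℝ × ℝ)}
    (hq : qs ∈ PBar S w) (hp : ps ∈ PBar S w) (hle : ∀ t, WeaklyAbove (qs t) (ps t))
    (hne : qs ≠ ps) :
    ∃ qs1 jl, jl ∈ W S ∧ TLoweredTo S w jl qs qs1 ∧ qs1 ∈ PBar S w ∧
      (∀ t, WeaklyAbove (qs1 t) (ps t)) := by
  classical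
  have hex : (Finset.univ.filter fun t => qs t ≠ ps t).Nonempty := by
    obtain ⟨t, ht⟩ := Function.ne_iff.1 hne
    exact ⟨t, by simp [ht]⟩
  set F := Finset.univ.filter fun t => qs t ≠ ps t with hF
  set t := F.max' hex with ht
  have htm : t ∈ F := Finset.max'_mem _ _
  have htne : qs t ≠ ps t := by simpa [hF] using htm
  have hafter : ∀ s, t < s → qs s = ps s := by
    intro s hs
    by_contra hc
    have : s ∈ F := by simp [hF, hc]
    exact absurd (Finset.le_max' F s this) (not_le.2 hs)
  obtain ⟨q1, j, l, hW, hlow, hab⟩ := (hg t).step _ (hq.1 t) _ (hp.1 t) (hle t) htne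
  have hinfo := (lowered_info hS hlow).1
  refine ⟨Function.update qs t q1, (j, l), hW, ⟨t, ?_, ?_⟩, ⟨?_, ?_⟩, ?_⟩
  · simpa using hlow
  · intro s hs; simp [hs]
  · intro s
    by_cases e : s = t
    · subst e; simpa using hlow.2.1
    · simpa [e] using hq.1 s
  · intro s u hsu a ha b hb hx
    by_cases es : s = t
    · rw [es] at ha hsu
      have eu : u ≠ t := ne_of_gt hsu
      simp only [Function.update_self] at ha
      simp only [ne_eq, eu, not_false_eq_true, Function.update_of_ne] at hb
      rw [hafter u hsu] at hb
      obtain ⟨r, hr, rfl⟩ := mem_pt ha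
      have hr' : r < (ps t).length := hab.1 ▸ hr
      have h1 := hab.2 r hr
      have h2 := hp.2 t u hsu _ (pt_mem hr') b hb
        (by rw [← hx]; exact ((hg t).xs _ (hp.1 t) _ hlow.2.1 r hr'))
      linarith
    · simp only [ne_eq, es, not_false_eq_true, Function.update_of_ne] at ha
      by_cases eu : u = t
      · rw [eu] at hb hsu
        simp only [Function.update_self] at hb
        obtain ⟨r, hr, rfl⟩ := mem_pt hb
        have hr' : r < (qs t).length := hinfo.1 ▸ hr
        have h1 := hinfo.2 r hr'
        have h2 := hq.2 s t hsu a ha _ (pt_mem hr')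
          (by rw [hx]; exact ((hg t).xs _ hlow.2.1 _ (hq.1 t) r hr))
        linarith
      · simp only [ne_eq, eu, not_false_eq_true, Function.update_of_ne] at hb
        exact hq.2 s u hsu a ha b hb hx
  · intro s
    by_cases e : s = t
    · subst e; simpa using hab
    · simpa [e] using hle s

theorem WeaklyAbove.refl (p : List (ℝ × ℝ)) : WeaklyAbove p p := ⟨rfl, fun _ _ => le_rfl⟩

theorem WeaklyAbove.trans {p q r : List (ℝ × ℝ)} (h : WeaklyAbove p q) (h' : WeaklyAbove q r) :
    WeaklyAbove p r :=
  ⟨h.1.trans h'.1, fun s hs => (h.2 s hs).trans (h'.2 s (h.1 ▸ hs))⟩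

/-- `jl` is a site between `qs` and `ps`. -/
def Btw (S : Setting) {T : ℕ} (qs ps : Fin T → List (ℝ × ℝ)) (jl : ℕ × ℤ) : Prop :=
  ∃ t r, r < (qs t).length ∧ (pt (qs t) r).1 = col S jl ∧
    (pt (qs t) r).2 ≤ lo S jl ∧ hi S jl ≤ (pt (ps t) r).2

theorem tseq {S : Setting} (hS : S.valid) {T : ℕ} {w : Fin T → ℕ × ℤ}
    (hg : ∀ t, Good S (w t).1 (w t).2) (ps : Fin T → List (ℝ × ℝ)) (hp : ps ∈ PBar S w) (m : ℕ) :
    ∀ qs, qs ∈ PBar S w → (∀ t, WeaklyAbove (qs t) (ps t)) →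
      (∑ t, hsum (ps t)) - (∑ t, hsum (qs t)) < m →
    (∃ ms, TMoveSeq S w qs ps ms ∧ ∀ b ∈ ms, b.1 = true ∧ Btw S qs ps b.2) ∧
    (∃ ms, TMoveSeq S w ps qs ms ∧ ∀ b ∈ ms, b.1 = false ∧ Btw S qs ps b.2) := by
  induction m with
  | zero =>
    intro qs hq hle hlt
    exfalso
    have := Finset.sum_le_sum (s := Finset.univ) fun t _ => hsum_mono (hle t)
    push_cast at hlt
    linarith
  | succ m ih =>
    intro qs hq hle hlt
    by_cases hne : qs = ps
    · subst hne
      exact ⟨⟨[], .nil _, by simp⟩, ⟨[], .nil _, by simp⟩⟩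
    obtain ⟨qs1, jl, hW, hT, hq1, hle1⟩ := tstep hS hg hq hp hle hne
    obtain ⟨t, ht, hs⟩ := id hT
    have hsum1 : (∑ t, hsum (qs t)) + 1 ≤ ∑ t, hsum (qs1 t) := by
      rw [← Finset.add_sum_erase _ _ (Finset.mem_univ t),
        ← Finset.add_sum_erase _ (fun t => hsum (qs1 t)) (Finset.mem_univ t)]
      have h1 := hsum_lowered hS ht
      have h2 : ∑ s ∈ Finset.univ.erase t, hsum (qs s) = ∑ s ∈ Finset.univ.erase t, hsum (qs1 s) :=
        Finset.sum_congr rfl fun s hs' => by rw [hs s (Finset.ne_of_mem_erase hs')]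
      linarith
    have hmono : ∀ s, WeaklyAbove (qs s) (qs1 s) := by
      intro s
      by_cases e : s = t
      · subst e; exact (lowered_info hS ht).1
      · rw [hs s e]; exact WeaklyAbove.refl _
    obtain ⟨⟨ms1, hm1, hb1⟩, ⟨ms2, hm2, hb2⟩⟩ := ih qs1 hq1 hle1 (by push_cast at hlt; linarith)
    have hB : Btw S qs ps jl := by
      obtain ⟨_, r, hr, h1, h2⟩ := lowered_info hS ht
      refine ⟨t, r, hr, by rw [h1], by rw [h1], ?_⟩
      have := (hle1 t).2 r ((hmono t).1 ▸ hr)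
      rw [h2] at this
      exact this
    have hB' : ∀ x, Btw S qs1 ps x → Btw S qs ps x := by
      rintro x ⟨t, r, hr, h1, h2, h3⟩
      have hr' : r < (qs t).length := (hmono t).1 ▸ hr
      refine ⟨t, r, hr', ?_, ((hmono t).2 r hr').trans h2, h3⟩
      rw [← h1]
      exact (hg t).xs _ (hq.1 t) _ (hq1.1 t) r hr'
    refine ⟨⟨_, .lower hW hT hq1.2 hm1, ?_⟩, ⟨_, hm2.trans (.raise hW hT hq.2 (.nil _)), ?_⟩⟩
    · intro b hb
      rcases List.mem_cons.1 hb with rfl | hb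
      · exact ⟨rfl, hB⟩
      · exact ⟨(hb1 b hb).1, hB' _ (hb1 b hb).2⟩
    · intro b hb
      rcases List.mem_append.1 hb with hb | hb
      · exact ⟨(hb2 b hb).1, hB' _ (hb2 b hb).2⟩
      · rw [List.mem_singleton] at hb
        subst hb
        exact ⟨rfl, hB⟩

theorem main_of_good {S : Setting} (hS : S.valid) {T : ℕ} {w : Fin T → ℕ × ℤ}
    (hg : ∀ t, Good S (w t).1 (w t).2)
    (ps ps' : Fin T → List (ℝ × ℝ)) (hps : ps ∈ PBar S w) (hps' : ps' ∈ PBar S w) :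
    ∃ ms : List (Bool × (ℕ × ℤ)), TMoveSeq S w ps' ps ms ∧
      ∀ jl : ℕ × ℤ, ¬((true, jl) ∈ ms ∧ (false, jl) ∈ ms) := by
  set qs : Fin T → List (ℝ × ℝ) := fun t => topPath (ps t) (ps' t) with hqs
  have hl : ∀ t, (ps t).length = (ps' t).length := fun t => (hg t).len _ (hps.1 t) _ (hps'.1 t)
  have hlq : ∀ t, (qs t).length = (ps t).length := fun t => length_top (hl t)
  have hpt : ∀ t r, r < (ps t).length →
      pt (qs t) r = ((pt (ps t) r).1, min (pt (ps t) r).2 (pt (ps' t) r).2) :=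
    fun t r hr => pt_top (hl t) hr
  have hx : ∀ t r, r < (ps t).length → (pt (ps t) r).1 = (pt (ps' t) r).1 :=
    fun t r hr => (hg t).xs _ (hps.1 t) _ (hps'.1 t) r hr
  have hq : qs ∈ PBar S w := by
    refine ⟨fun t => (hg t).meet _ (hps.1 t) _ (hps'.1 t), ?_⟩
    intro s t hst a ha b hb hab
    obtain ⟨r, hr, rfl⟩ := mem_pt ha
    obtain ⟨u, hu, rfl⟩ := mem_pt hb
    rw [hlq] at hr hu
    rw [hpt s r hr, hpt t u hu] at hab ⊢
    simp only at hab ⊢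
    have h1 := hps.2 s t hst _ (pt_mem hr) _ (pt_mem hu) hab
    have h2 := hps'.2 s t hst _ (pt_mem (hl s ▸ hr)) _ (pt_mem (hl t ▸ hu))
      (by rw [← hx s r hr, ← hx t u hu, hab])
    exact min_lt_min h1 h2
  have hle : ∀ t, WeaklyAbove (qs t) (ps t) := fun t => ⟨hlq t, fun r hr => by
    rw [hpt t r (hlq t ▸ hr)]; exact min_le_left _ _⟩
  have hle' : ∀ t, WeaklyAbove (qs t) (ps' t) := fun t => ⟨(hlq t).trans (hl t), fun r hr => by
    rw [hpt t r (hlq t ▸ hr)]; exact min_le_right _ _⟩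
  obtain ⟨m, hm⟩ := exists_nat_gt ((∑ t, hsum (ps t)) - (∑ t, hsum (qs t)))
  obtain ⟨m', hm'⟩ := exists_nat_gt ((∑ t, hsum (ps' t)) - (∑ t, hsum (qs t)))
  obtain ⟨⟨ms1, h1, hb1⟩, -⟩ := tseq hS hg ps hps m qs hq hle hm
  obtain ⟨-, ⟨ms2, h2, hb2⟩⟩ := tseq hS hg ps' hps' m' qs hq hle' hm'
  refine ⟨ms2 ++ ms1, h2.trans h1, ?_⟩
  rintro jl ⟨ht, hf⟩
  have ht1 : (true, jl) ∈ ms1 := by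
    rcases List.mem_append.1 ht with h | h
    · exact absurd (hb2 _ h).1 (by simp)
    · exact h
  have hf1 : (false, jl) ∈ ms2 := by
    rcases List.mem_append.1 hf with h | h
    · exact h
    · exact absurd (hb1 _ h).1 (by simp)
  obtain ⟨t, r, hr, hc, hlo, hhi⟩ := (hb1 _ ht1).2
  obtain ⟨s, u, hu, hc', hlo', hhi'⟩ := (hb2 _ hf1).2
  have hlh := lo_hi hS jl
  simp only at hc hlo hhi hc' hlo' hhi'
  rw [hlq] at hr hu
  rw [hpt t r hr] at hc hlo
  rw [hpt s u hu] at hc' hlo'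
  simp only at hc hlo hc' hlo'
  -- order of the two slots
  have key : (t = s ∧ r = u) ∨
      ((pt (ps t) r).2 < (pt (ps s) u).2) ∨ ((pt (ps' s) u).2 < (pt (ps' t) r).2) := by
    rcases lt_trichotomy t s with h | h | h
    · right; left
      exact hps.2 t s h _ (pt_mem hr) _ (pt_mem hu) (hc.trans hc'.symm)
    · subst h
      rcases lt_trichotomy r u with h | h | h
      · right; right
        exact (hg t).ord _ (hps'.1 t) r u h (hl t ▸ hu)
          (by rw [← hx t r hr, ← hx t u hu, hc, hc'])
      · exact Or.inl ⟨rfl, h⟩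
      · right; left
        exact (hg t).ord _ (hps.1 t) u r h hr (hc'.trans hc.symm)
    · right; right
      exact hps'.2 s t h _ (pt_mem (hl s ▸ hu)) _ (pt_mem (hl t ▸ hr))
        (by rw [← hx t r hr, ← hx s u hu, hc, hc'])
  rcases key with ⟨rfl, rfl⟩ | h | h
  · rcases min_le_iff.1 hlo with h | h <;> linarith
  · rcases min_le_iff.1 hlo' with h' | h' <;> linarith
  · rcases min_le_iff.1 hlo with h' | h' <;> linarith

/-! ### Type A -/

structure ZA (n i : ℕ) (k : ℤ) (p : List (ℝ × ℝ)) (z : ℕ → ℤ) : Prop where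
  len : p.length = n + 2
  pts : ∀ r, r < n + 2 → pt p r = ((r : ℝ), (z r : ℝ))
  z0 : z 0 = i + k
  zn : z (n + 1) = n + 1 - i + k
  st : ∀ r, r ≤ n → z (r + 1) - z r = 1 ∨ z (r + 1) - z r = -1

theorem ZA.of {n i : ℕ} {k : ℤ} {p : List (ℝ × ℝ)} (h : p ∈ pathsA n i k) : ∃ z, ZA n i k p z := by
  obtain ⟨h1, h2, h3, h4, h5⟩ := h
  have hex : ∀ r, r < n + 2 → ∃ z : ℤ, (pt p r).2 = (z : ℝ) := by
    intro r
    induction r with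
    | zero => intro _; exact ⟨i + k, by rw [h3]; push_cast; ring⟩
    | succ r ih =>
      intro hr
      obtain ⟨z, hz⟩ := ih (by omega)
      rcases h5 r (by omega) with h | h
      · exact ⟨z + 1, by push_cast; linarith⟩
      · exact ⟨z - 1, by push_cast; linarith⟩
  choose! z hz using hex
  refine ⟨z, h1, fun r hr => Prod.ext (h2 r hr) (hz r hr), ?_, ?_, ?_⟩
  · have := hz 0 (by omega)
    rw [h3] at this
    exact_mod_cast this.symm
  · have := hz (n + 1) (by omega)
    rw [h4] at this
    have h' : ((z (n + 1) : ℤ) : ℝ) = ((n + 1 - i + k : ℤ) : ℝ) := by push_cast; linarith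
    exact_mod_cast h'
  · intro r hr
    have a := h5 r hr
    rw [hz r (by omega), hz (r + 1) (by omega)] at a
    exact_mod_cast a

theorem ZA.mem {n i : ℕ} {k : ℤ} {p : List (ℝ × ℝ)} {z : ℕ → ℤ} (h : ZA n i k p z) :
    p ∈ pathsA n i k := by
  refine ⟨h.len, fun r hr => by rw [h.pts r hr], ?_, ?_, ?_⟩
  · rw [h.pts 0 (by omega)]; simp only [h.z0]; push_cast; ring
  · rw [h.pts (n + 1) (by omega)]; simp only [h.zn]; push_cast; ring
  · intro r hr
    rw [h.pts r (by omega), h.pts (r + 1) (by omega)]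
    simp only
    exact_mod_cast h.st r hr

theorem ZA.par {n i : ℕ} {k : ℤ} {p : List (ℝ × ℝ)} {z : ℕ → ℤ} (h : ZA n i k p z) (r : ℕ)
    (hr : r < n + 2) : (z r - i - k - r) % 2 = 0 := by
  induction r with
  | zero => have := h.z0; push_cast; omega
  | succ r ih =>
    have := ih (by omega)
    have := h.st r (by omega)
    push_cast; omega

theorem goodA {n i : ℕ} {k : ℤ} (hX : (i, k) ∈ X (.A n)) : Good (.A n) i k where
  len := fun p hp q hq => hp.1.trans hq.1.symm
  xs := fun p hp q hq r hr => by
    rw [hp.2.1 r (hp.1 ▸ hr), hq.2.1 r (hp.1 ▸ hr)]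
  ord := fun p hp r s hrs hs hx => by
    have hl := hp.1
    rw [hp.2.1 r (by omega), hp.2.1 s (by omega)] at hx
    have : r = s := by exact_mod_cast hx
    omega
  meet := fun p hp q hq => by
    obtain ⟨z, hz⟩ := ZA.of hp
    obtain ⟨y, hy⟩ := ZA.of hq
    have hl : p.length = q.length := hz.len.trans hy.len.symm
    refine ZA.mem (z := fun r => min (z r) (y r)) ⟨(length_top hl).trans hz.len, ?_, ?_, ?_, ?_⟩
    · intro r hr
      rw [pt_top hl (hz.len ▸ hr), hz.pts r hr, hy.pts r hr]
      simp
    · have := hz.z0; have := hy.z0; omega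
    · have := hz.zn; have := hy.zn; omega
    · intro r hr
      have := hz.st r hr
      have := hy.st r hr
      have := hz.par r (by omega)
      have := hy.par r (by omega)
      omega
  step := fun q hq p hp hle hne => by
    obtain ⟨z, hz⟩ := ZA.of hq
    obtain ⟨y, hy⟩ := ZA.of hp
    have hzy : ∀ r, r < n + 2 → z r ≤ y r := by
      intro r hr
      have := hle.2 r (hz.len ▸ hr)
      rw [hz.pts r hr, hy.pts r hr] at this
      simp only at this
      exact_mod_cast this
    have hex : ((Finset.range (n + 2)).filter fun r => z r < y r).Nonempty := by
      by_contra hc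
      rw [Finset.not_nonempty_iff_eq_empty, Finset.filter_eq_empty_iff] at hc
      apply hne
      apply pt_ext hle.1
      intro r hr
      rw [hz.len] at hr
      have h1 := hc (Finset.mem_range.2 hr)
      have h2 := hzy r hr
      rw [hz.pts r hr, hy.pts r hr, show z r = y r by omega]
    obtain ⟨j, hj, hmin⟩ := Finset.exists_min_image _ z hex
    rw [Finset.mem_filter, Finset.mem_range] at hj
    obtain ⟨hj2, hlt⟩ := hj
    have hmin' : ∀ r, r < n + 2 → z r < z j → z r = y r := by
      intro r hr h
      by_contra hc
      have := hmin r (by rw [Finset.mem_filter, Finset.mem_range]; exact ⟨hr, by have := hzy r hr; omega⟩)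
      omega
    have hj0 : j ≠ 0 := by
      rintro rfl
      have := hz.z0; have := hy.z0; omega
    have hjn : j ≠ n + 1 := by
      rintro rfl
      have := hz.zn; have := hy.zn; omega
    have hzp := hz.par j hj2
    have hyp := hy.par j hj2
    have hup : z (j + 1) = z j + 1 := by
      have h1 := hz.st j (by omega)
      have h2 := hy.st j (by omega)
      have h3 := hmin' (j + 1) (by omega)
      omega
    have hdn : z (j - 1) = z j + 1 := by
      have h1 := hz.st (j - 1) (by omega)
      have h2 := hy.st (j - 1) (by omega)
      have h3 := hmin' (j - 1) (by omega)
      rw [show j - 1 + 1 = j by omega] at h1 h2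
      omega
    have hjl : j < q.length := by rw [hz.len]; exact hj2
    have hq1 : ZA n i k (q.set j ((j : ℝ), ((z j + 2 : ℤ) : ℝ)))
        (fun r => if r = j then z j + 2 else z r) := by
      refine ⟨by simp [hz.len], ?_, ?_, ?_, ?_⟩
      · intro r hr
        rw [pt_set hjl]
        split_ifs with h
        · rw [h]
        · exact hz.pts r hr
      · rw [if_neg (by omega)]; exact hz.z0
      · rw [if_neg (by omega)]; exact hz.zn
      · intro r hr
        have := hz.st r hr
        split_ifs with h1 h2 h2
        · omega
        · have : r = j - 1 := by omega
          subst this; omega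
        · subst h2; omega
        · exact this
    refine ⟨_, j, z j + 1, ?_, ⟨hq, hq1.mem, ⟨?_, ?_⟩, ?_⟩, ?_⟩
    · have : ((i : ℤ) - k) % 2 = 1 := hX.2.2
      refine ⟨by simp only; omega, by simp only; omega, ?_⟩
      simp only [rr]
      push_cast
      omega
    · simp only [Cp, rr]
      refine ⟨by simp only; omega, by simp only; omega, ?_, ?_, ?_⟩
      · rw [hz.pts j hj2]; push_cast; simp
      · rw [hz.pts (j - 1) (by omega)]; simp [hdn]
      · rw [hz.pts (j + 1) (by omega)]; simp [hup]
    · simp only [Cp, rr]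
      rintro ⟨_, _, h, _⟩
      simp only at h
      rw [hz.pts j hj2] at h
      have := congrArg Prod.snd h
      simp only at this
      have : z j = z j + 1 + ((1 : ℕ) : ℤ) := by exact_mod_cast this
      omega
    · simp only
      refine ⟨j, hjl, ?_, by simp, ?_, ?_⟩
      · rw [hz.pts j hj2]; push_cast; simp
      · rw [pt_set hjl, if_pos rfl]; push_cast; congr 1; ring
      · intro s hs hsj
        rw [pt_set hjl, if_neg hsj]
    · refine ⟨by rw [List.length_set]; exact hle.1, ?_⟩
      intro r hr
      rw [List.length_set, hz.len] at hr
      rw [hq1.pts r hr, hy.pts r hr]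
      simp only
      have h1 := hzy r hr
      split_ifs with h
      · subst h
        exact_mod_cast (by omega : z r + 2 ≤ y r)
      · exact_mod_cast h1

/-! ### Type B: half paths -/

/-- Columns of a half path. -/
def xc (n : ℕ) (l : ℤ) (r : ℕ) : ℤ := if l % 4 = 3 then 2 * (r : ℤ) else 4 * (n : ℤ) - 2 - 2 * (r : ℤ)

structure Zok (n : ℕ) (c : ℤ) (z : ℕ → ℤ) (e : ℤ) : Prop where
  z0 : z 0 = c
  st : ∀ r, r + 2 ≤ n → z (r + 1) - z r = 2 ∨ z (r + 1) - z r = -2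
  he : e = 1 ∨ e = -1

theorem Zok.par {n : ℕ} {c : ℤ} {z : ℕ → ℤ} {e : ℤ} (h : Zok n c z e) (r : ℕ) (hr : r < n) :
    (z r - c - 2 * r) % 4 = 0 := by
  induction r with
  | zero => have := h.z0; push_cast; omega
  | succ r ih =>
    have := ih (by omega)
    have := h.st r (by omega)
    push_cast; omega

def ZLe (n : ℕ) (z : ℕ → ℤ) (e : ℤ) (y : ℕ → ℤ) (f : ℤ) : Prop :=
  (∀ r, r < n → z r ≤ y r) ∧ (z (n - 1) < y (n - 1) ∨ z (n - 1) = y (n - 1) ∧ e ≤ f)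

def ZMove (n : ℕ) (z : ℕ → ℤ) (e : ℤ) (z1 : ℕ → ℤ) (e1 : ℤ) (j : ℕ) : Prop :=
  (j = n ∧ e = -1 ∧ e1 = 1 ∧ z1 = z) ∨
  (1 ≤ j ∧ j + 1 < n ∧ e1 = e ∧ z (j - 1) = z j + 2 ∧ z (j + 1) = z j + 2 ∧
    z1 = fun r => if r = j then z j + 4 else z r) ∨
  (1 ≤ j ∧ j + 1 = n ∧ e = 1 ∧ e1 = -1 ∧ z (j - 1) = z j + 2 ∧
    z1 = fun r => if r = j then z j + 4 else z r)

theorem zstep {n : ℕ} {c : ℤ} {z y : ℕ → ℤ} {e f : ℤ} (hn : 2 ≤ n) (hz : Zok n c z e)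
    (hy : Zok n c y f) (hle : ZLe n z e y f) (hne : ¬ ((∀ r, r < n → z r = y r) ∧ e = f)) :
    ∃ z1 e1 j, Zok n c z1 e1 ∧ ZLe n z1 e1 y f ∧ ZMove n z e z1 e1 j := by
  obtain ⟨hle1, hle2⟩ := hle
  have he := hz.he
  have hf := hy.he
  by_cases hex : ((Finset.range n).filter fun r => z r < y r).Nonempty
  · obtain ⟨j, hj, hmin⟩ := Finset.exists_min_image _ z hex
    rw [Finset.mem_filter, Finset.mem_range] at hj
    obtain ⟨hj2, hlt⟩ := hj
    have hmin' : ∀ r, r < n → z r < z j → z r = y r := by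
      intro r hr h
      by_contra hc
      have := hmin r (by
        rw [Finset.mem_filter, Finset.mem_range]; exact ⟨hr, by have := hle1 r hr; omega⟩)
      omega
    have hj0 : j ≠ 0 := by
      rintro rfl
      have := hz.z0; have := hy.z0; omega
    have hzp := hz.par j hj2
    have hyp := hy.par j hj2
    have hdn : z (j - 1) = z j + 2 := by
      have h1 := hz.st (j - 1) (by omega)
      have h2 := hy.st (j - 1) (by omega)
      have h3 := hmin' (j - 1) (by omega)
      rw [show j - 1 + 1 = j by omega] at h1 h2
      omega
    have hok : ∀ e1 : ℤ, (e1 = 1 ∨ e1 = -1) → (j + 1 < n → z (j + 1) = z j + 2) →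
        Zok n c (fun r => if r = j then z j + 4 else z r) e1 := by
      intro e1 he1 hup
      refine ⟨?_, ?_, he1⟩
      · rw [if_neg (by omega)]; exact hz.z0
      · intro r hr
        have := hz.st r hr
        split_ifs with h1 h2 h2
        · omega
        · have : r = j - 1 := by omega
          subst this; omega
        · subst h2; have := hup (by omega); omega
        · exact this
    have hle' : ∀ r, r < n → (fun r => if r = j then z j + 4 else z r) r ≤ y r := by
      intro r hr
      have := hle1 r hr
      simp only
      split_ifs with h
      · subst h; omega
      · exact this
    by_cases hjn : j + 1 < n
    · have hup : z (j + 1) = z j + 2 := by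
        have h1 := hz.st j (by omega)
        have h2 := hy.st j (by omega)
        have h3 := hmin' (j + 1) (by omega)
        omega
      refine ⟨_, e, j, hok e he (fun _ => hup), ⟨hle', ?_⟩,
        Or.inr (Or.inl ⟨by omega, hjn, rfl, hdn, hup, rfl⟩)⟩
      beta_reduce
      rw [if_neg (by omega)]
      exact hle2
    · have hjn' : j = n - 1 := by omega
      rcases he with he | he
      · refine ⟨_, -1, j, hok (-1) (Or.inr rfl) (fun h => absurd h hjn), ⟨hle', ?_⟩,
          Or.inr (Or.inr ⟨by omega, by omega, he, rfl, hdn, rfl⟩)⟩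
        beta_reduce
        rw [if_pos hjn'.symm]
        rw [← hjn']
        omega
      · refine ⟨z, 1, n, ⟨hz.z0, hz.st, Or.inl rfl⟩, ⟨hle1, ?_⟩, Or.inl ⟨rfl, he, rfl, rfl⟩⟩
        left
        rw [← hjn']; exact hlt
  · have heq : ∀ r, r < n → z r = y r := by
      intro r hr
      by_contra hc
      exact hex ⟨r, by
        rw [Finset.mem_filter, Finset.mem_range]; exact ⟨hr, by have := hle1 r hr; omega⟩⟩
    have hef : e ≠ f := fun h => hne ⟨heq, h⟩
    have h1 := heq (n - 1) (by omega)
    refine ⟨z, 1, n, ⟨hz.z0, hz.st, Or.inl rfl⟩, ⟨hle1, ?_⟩, Or.inl ⟨rfl, by omega, rfl, rfl⟩⟩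
    right
    exact ⟨h1, by omega⟩

structure ZB (n : ℕ) (ε : ℝ) (l : ℤ) (p : List (ℝ × ℝ)) (z : ℕ → ℤ) (e : ℤ) : Prop where
  len : p.length = n + 1
  pts : ∀ r, r < n → pt p r = ((xc n l r : ℝ), (z r : ℝ))
  ptn : pt p n = (2 * (n : ℝ) - 1, (z (n - 1) : ℝ) + e * (1 + ε))
  ok : Zok n (l + 2 * n - 1) z e

theorem xc_cond (n : ℕ) (l : ℤ) (p : List (ℝ × ℝ)) :
    (if l % 4 = 3 then ∀ r, r < n → (pt p r).1 = 2 * (r : ℝ)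
     else ∀ r, r < n → (pt p r).1 = 4 * (n : ℝ) - 2 - 2 * (r : ℝ)) ↔
    ∀ r, r < n → (pt p r).1 = (xc n l r : ℝ) := by
  unfold xc
  split_ifs <;> push_cast <;> rfl

theorem ZB.of {n : ℕ} {ε : ℝ} {l : ℤ} {p : List (ℝ × ℝ)} (hn : 2 ≤ n)
    (h : p ∈ pathsBspin n ε l) : ∃ z e, ZB n ε l p z e := by
  obtain ⟨h1, h2, h3, h4, h5, h6⟩ := h
  rw [xc_cond] at h2
  have hex : ∀ r, r < n → ∃ z : ℤ, (pt p r).2 = (z : ℝ) := by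
    intro r
    induction r with
    | zero => intro _; exact ⟨l + 2 * n - 1, by rw [h4]; push_cast; ring⟩
    | succ r ih =>
      intro hr
      obtain ⟨z, hz⟩ := ih (by omega)
      rcases h5 r (by omega) with h | h
      · exact ⟨z + 2, by push_cast; linarith⟩
      · exact ⟨z - 2, by push_cast; linarith⟩
  choose! z hz using hex
  have hz0 : z 0 = l + 2 * n - 1 := by
    have := hz 0 (by omega)
    rw [h4] at this
    have h' : ((z 0 : ℤ) : ℝ) = ((l + 2 * n - 1 : ℤ) : ℝ) := by push_cast; linarith
    exact_mod_cast h'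
  have hst : ∀ r, r + 2 ≤ n → z (r + 1) - z r = 2 ∨ z (r + 1) - z r = -2 := by
    intro r hr
    have a := h5 r hr
    rw [hz r (by omega), hz (r + 1) (by omega)] at a
    exact_mod_cast a
  rw [hz (n - 1) (by omega)] at h6
  rcases h6 with h6 | h6
  · refine ⟨z, 1, h1, fun r hr => Prod.ext (h2 r hr) (hz r hr), Prod.ext h3 ?_, hz0, hst, Or.inl rfl⟩
    push_cast; linarith
  · refine ⟨z, -1, h1, fun r hr => Prod.ext (h2 r hr) (hz r hr), Prod.ext h3 ?_, hz0, hst,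
      Or.inr rfl⟩
    push_cast; linarith

theorem ZB.mem {n : ℕ} {ε : ℝ} {l : ℤ} {p : List (ℝ × ℝ)} {z : ℕ → ℤ} {e : ℤ} (hn : 2 ≤ n)
    (h : ZB n ε l p z e) : p ∈ pathsBspin n ε l := by
  refine ⟨h.len, ?_, by rw [h.ptn], ?_, ?_, ?_⟩
  · rw [xc_cond]
    intro r hr
    rw [h.pts r hr]
  · rw [h.pts 0 (by omega)]; simp only [h.ok.z0]; push_cast; ring
  · intro r hr
    rw [h.pts r (by omega), h.pts (r + 1) (by omega)]
    simp only
    exact_mod_cast h.ok.st r hr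
  · rw [h.ptn, h.pts (n - 1) (by omega)]
    simp only
    rcases h.ok.he with he | he
    · left; rw [he]; push_cast; ring
    · right; rw [he]; push_cast; ring

theorem ZB.mk_exists {n : ℕ} (ε : ℝ) {l : ℤ} {z : ℕ → ℤ} {e : ℤ}
    (h : Zok n (l + 2 * n - 1) z e) : ∃ p, ZB n ε l p z e := by
  set g : ℕ → ℝ × ℝ := fun r => if r < n then ((xc n l r : ℝ), (z r : ℝ)) else
    (2 * (n : ℝ) - 1, (z (n - 1) : ℝ) + e * (1 + ε)) with hg
  have hpt : ∀ r, r < n + 1 → pt ((List.range (n + 1)).map g) r = g r := by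
    intro r hr
    unfold pt
    rw [List.getD_eq_getElem _ _ (by simpa using hr)]
    simp
  refine ⟨(List.range (n + 1)).map g, by simp, ?_, ?_, h⟩
  · intro r hr
    rw [hpt r (by omega)]
    simp [hg, hr]
  · rw [hpt n (by omega)]
    simp [hg]

theorem fin_lt {ε : ℝ} (h0 : 0 < ε) (h1 : ε < 1 / 2) {z y e f : ℤ} (he : e = 1 ∨ e = -1)
    (hf : f = 1 ∨ f = -1) (h : z + 4 ≤ y) :
    (z : ℝ) + e * (1 + ε) < (y : ℝ) + f * (1 + ε) := by
  have : (z : ℝ) + 4 ≤ y := by exact_mod_cast h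
  rcases he with rfl | rfl <;> rcases hf with rfl | rfl <;> push_cast <;> linarith

theorem fin_le_iff {ε : ℝ} (h0 : 0 < ε) (h1 : ε < 1 / 2) {z y e f : ℤ} (he : e = 1 ∨ e = -1)
    (hf : f = 1 ∨ f = -1) (h : (z - y) % 4 = 0) :
    (z : ℝ) + e * (1 + ε) ≤ (y : ℝ) + f * (1 + ε) ↔ (z < y ∨ z = y ∧ e ≤ f) := by
  rcases lt_trichotomy z y with hlt | heq | hgt
  · have := fin_lt h0 h1 he hf (show z + 4 ≤ y by omega)
    constructor
    · intro _; left; exact hlt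
    · intro _; exact this.le
  · subst heq
    have h2 : (0 : ℝ) < 1 + ε := by linarith
    rw [add_le_add_iff_left, mul_le_mul_iff_left₀ h2]
    simp
  · have := fin_lt h0 h1 hf he (show y + 4 ≤ z by omega)
    constructor
    · intro h'; linarith
    · intro h'; omega

theorem ZB.le_iff {n : ℕ} {ε : ℝ} (hn : 2 ≤ n) (h0 : 0 < ε) (h1 : ε < 1 / 2) {l : ℤ}
    {q p : List (ℝ × ℝ)} {z y : ℕ → ℤ} {e f : ℤ} (hz : ZB n ε l q z e) (hy : ZB n ε l p y f) :
    ZLe n z e y f ↔ ∀ r, r ≤ n → (pt q r).2 ≤ (pt p r).2 := by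
  have a := hz.ok.par (n - 1) (by omega)
  have b := hy.ok.par (n - 1) (by omega)
  have hfin := fin_le_iff h0 h1 hz.ok.he hy.ok.he (z := z (n - 1)) (y := y (n - 1)) (by omega)
  constructor
  · rintro ⟨h2, h3⟩ r hr
    rcases hr.lt_or_eq with hr | rfl
    · rw [hz.pts r hr, hy.pts r hr]
      simp only
      exact_mod_cast h2 r hr
    · rw [hz.ptn, hy.ptn]
      exact hfin.2 h3
  · intro h
    refine ⟨fun r hr => ?_, ?_⟩
    · have := h r hr.le
      rw [hz.pts r hr, hy.pts r hr] at this
      simp only at this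
      exact_mod_cast this
    · have := h n le_rfl
      rw [hz.ptn, hy.ptn] at this
      exact hfin.1 this

theorem ZB.ext {n : ℕ} {ε : ℝ} (hn : 2 ≤ n) {l : ℤ}
    {q p : List (ℝ × ℝ)} {z y : ℕ → ℤ} {e f : ℤ} (hz : ZB n ε l q z e) (hy : ZB n ε l p y f)
    (h : (∀ r, r < n → z r = y r) ∧ e = f) : q = p := by
  apply pt_ext (hz.len.trans hy.len.symm)
  intro r hr
  rw [hz.len] at hr
  rcases (Nat.lt_succ_iff.1 hr).lt_or_eq with hr | rfl
  · rw [hz.pts r hr, hy.pts r hr, h.1 r hr]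
  · rw [hz.ptn, hy.ptn, h.1 (r - 1) (by omega), h.2]

theorem ZB.top {n : ℕ} {ε : ℝ} (hn : 2 ≤ n) (h0 : 0 < ε) (h1 : ε < 1 / 2) {l : ℤ}
    {q p : List (ℝ × ℝ)} {z y : ℕ → ℤ} {e f : ℤ} (hz : ZB n ε l q z e) (hy : ZB n ε l p y f) :
    ∃ x g, ZB n ε l (topPath q p) x g := by
  have hl : q.length = p.length := hz.len.trans hy.len.symm
  have a := hz.ok.par (n - 1) (by omega)
  have b := hy.ok.par (n - 1) (by omega)
  have hfin := fin_le_iff h0 h1 hz.ok.he hy.ok.he (z := z (n - 1)) (y := y (n - 1)) (by omega)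
  have hst : ∀ r, r + 2 ≤ n → min (z (r + 1)) (y (r + 1)) - min (z r) (y r) = 2 ∨
      min (z (r + 1)) (y (r + 1)) - min (z r) (y r) = -2 := by
    intro r hr
    have := hz.ok.st r hr
    have := hy.ok.st r hr
    have := hz.ok.par r (by omega)
    have := hy.ok.par r (by omega)
    omega
  have hz0 := hz.ok.z0
  have hy0 := hy.ok.z0
  have hp : ∀ r, r < n → pt (topPath q p) r = ((xc n l r : ℝ), ((min (z r) (y r) : ℤ) : ℝ)) := by
    intro r hr
    rw [pt_top hl (by rw [hz.len]; omega), hz.pts r hr, hy.pts r hr]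
    simp
  have hlen : (topPath q p).length = n + 1 := (length_top hl).trans hz.len
  have hpn := pt_top hl (r := n) (by rw [hz.len]; omega)
  rw [hz.ptn, hy.ptn] at hpn
  simp only at hpn
  by_cases hc : z (n - 1) < y (n - 1) ∨ z (n - 1) = y (n - 1) ∧ e ≤ f
  · refine ⟨fun r => min (z r) (y r), e, hlen, hp, ?_, by omega, hst, hz.ok.he⟩
    rw [hpn, min_eq_left (hfin.2 hc), min_eq_left (by omega)]
  · refine ⟨fun r => min (z r) (y r), f, hlen, hp, ?_, by omega, hst, hy.ok.he⟩
    rw [hpn, min_eq_right (not_le.1 (mt hfin.1 hc)).le, min_eq_right (by omega)]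

/-! ### Type B: half paths inside paths -/

theorem iota_eq {n j : ℕ} {l v : ℤ} (hl : l % 2 = 1) (hj : j < n)
    (hv : (v - (l + 2 * n - 1) - 2 * j) % 4 = 0) : iotaB n (j, v) = (xc n l j, v) := by
  unfold iotaB xc
  simp only
  rw [if_neg (by omega)]
  by_cases h : l % 4 = 3
  · rw [if_pos h, if_pos (by omega)]
  · rw [if_neg h, if_neg (by omega)]

theorem xc_ne_mid (n : ℕ) (l : ℤ) (r : ℕ) : (xc n l r : ℝ) ≠ 2 * (n : ℝ) - 1 := by
  intro h
  have : xc n l r = 2 * (n : ℤ) - 1 := by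
    have h' : ((xc n l r : ℤ) : ℝ) = ((2 * (n : ℤ) - 1 : ℤ) : ℝ) := by push_cast; exact h
    exact_mod_cast h'
  unfold xc at this
  split_ifs at this <;> omega

theorem xc_inj {n : ℕ} {l : ℤ} {r s : ℕ} (h : (xc n l r : ℝ) = xc n l s) : r = s := by
  have : xc n l r = xc n l s := by exact_mod_cast h
  unfold xc at this
  split_ifs at this <;> omega

theorem xc_disj {n : ℕ} {l l' : ℤ} (h1 : l % 2 = 1) (h2 : l' % 2 = 1) (h : l % 4 ≠ l' % 4)
    {r s : ℕ} (hr : r < n) (hs : s < n) : (xc n l r : ℝ) ≠ xc n l' s := by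
  intro he
  have : xc n l r = xc n l' s := by exact_mod_cast he
  unfold xc at this
  split_ifs at this <;> omega

structure Emb (n : ℕ) (l : ℤ) (q Q : List (ℝ × ℝ)) (f : ℕ → ℕ) : Prop where
  lt : ∀ r, r ≤ n → f r < Q.length
  inj : ∀ r s, r ≤ n → s ≤ n → f r = f s → r = s
  pts : ∀ r, r ≤ n → pt Q (f r) = pt q r
  adj : ∀ r, 1 ≤ r → r < n → (f (r - 1) + 1 = f r ∧ f (r + 1) = f r + 1) ∨
    (f (r + 1) + 1 = f r ∧ f (r - 1) = f r + 1)
  oth : ∀ s, s < Q.length → (∃ r, r ≤ n ∧ s = f r) ∨ ∀ r, r < n → (pt Q s).1 ≠ (xc n l r : ℝ)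

theorem lift_move {n : ℕ} {ε : ℝ} (hn : 2 ≤ n) (h0 : 0 < ε) (h1 : ε < 1 / 2) {l : ℤ}
    (hl : l % 2 = 1) {i : ℕ} {k : ℤ}
    {q q1 Q Q1 : List (ℝ × ℝ)} {z z1 : ℕ → ℤ} {e e1 : ℤ} {f : ℕ → ℕ} {j : ℕ}
    (hQ : Q ∈ pathsB n ε i k) (hQ1 : Q1 ∈ pathsB n ε i k)
    (hE : Emb n l q Q f) (hE1 : ∀ r, r ≤ n → pt Q1 (f r) = pt q1 r) (hlen : Q1.length = Q.length)
    (hsame : ∀ s, s < Q.length → (∀ r, r ≤ n → s ≠ f r) → pt Q1 s = pt Q s)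
    (hz : ZB n ε l q z e) (hz1 : ZB n ε l q1 z1 e1) (hm : ZMove n z e z1 e1 j)
    (hmid : j = n → ∀ s, s < Q.length → (∀ r, r ≤ n → s ≠ f r) → (pt Q s).1 = 2 * (n : ℝ) - 1 →
      (pt Q s).2 < (pt q n).2 ∨ (pt q1 n).2 ≤ (pt Q s).2) :
    ∃ L, (j, L) ∈ W (.B n ε) ∧ LoweredTo (.B n ε) i k j L Q Q1 := by
  have hpar := hz.ok.par
  have hcan : 1 ≤ j → j < n → z (j - 1) = z j + 2 → (pt q j).2 < (pt q (j + 1)).2 →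
      (j, z j + 2) ∈ W (.B n ε) ∧ CanLower (.B n ε) Q j (z j + 2) := by
    intro hj1 hjn hd hu
    have hp := hpar j hjn
    have hd' : (pt q j).2 < (pt q (j - 1)).2 := by
      rw [hz.pts j hjn, hz.pts (j - 1) (by omega), hd]; push_cast; linarith
    have hrr : rr (.B n ε) j = 2 := by simp [rr]; omega
    have hX : (j, z j) ∈ XB n := Or.inr ⟨hj1, hjn, by simp only; omega⟩
    have i1 : iotaB n (j, z j) = (xc n l j, z j) := iota_eq hl hjn hp
    have i2 : iotaB n (j, z j + 4) = (xc n l j, z j + 4) := iota_eq hl hjn (by omega)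
    refine ⟨?_, ?_, ?_⟩
    · simp only [W, Set.mem_ofPred_eq, hrr, X]
      rwa [show z j + 2 - ((2 : ℕ) : ℤ) = z j by push_cast; ring]
    · rw [hrr, show z j + 2 - ((2 : ℕ) : ℤ) = z j by push_cast; ring]
      refine ⟨hX, Or.inl ⟨f j, ?_, ?_, ?_, ?_, ?_, ?_, ?_⟩⟩
      · rcases hE.adj j hj1 hjn with h | h <;> omega
      · have a := hE.lt (j + 1) (by omega)
        have b := hE.lt (j - 1) (by omega)
        rcases hE.adj j hj1 hjn with h | h <;> omega
      · rw [i1, hE.pts j hjn.le, hz.pts j hjn]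
      · rw [i1]; unfold xc; simp only; split_ifs <;> omega
      · rw [i1]; unfold xc; simp only; split_ifs <;> omega
      · rw [i1]; unfold xc; simp only; split_ifs <;> omega
      · rw [if_pos rfl]
        rw [← hE.pts j hjn.le, ← hE.pts (j - 1) (by omega)] at hd'
        rw [← hE.pts j hjn.le, ← hE.pts (j + 1) (by omega)] at hu
        rcases hE.adj j hj1 hjn with h | h
        · rw [show f j - 1 = f (j - 1) by omega, ← h.2]
          exact ⟨hd', hu⟩
        · rw [show f j - 1 = f (j + 1) by omega, ← h.2]
          exact ⟨hu, hd'⟩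
    · rw [hrr, show z j + 2 + ((2 : ℕ) : ℤ) = z j + 4 by push_cast; ring]
      rintro ⟨_, ⟨r, _, hr, hpt, _⟩ | ⟨h, _⟩⟩
      · rw [i2] at hpt
        simp only at hpt
        rcases hE.oth r (by omega) with ⟨s, hs, rfl⟩ | h
        · rw [hE.pts s hs] at hpt
          rcases hs.lt_or_eq with hs | rfl
          · rw [hz.pts s hs, Prod.mk.injEq] at hpt
            have := xc_inj hpt.1
            subst this
            have h2 : z s = z s + 4 := by exact_mod_cast hpt.2
            omega
          · rw [hz.ptn, Prod.mk.injEq] at hpt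
            exact xc_ne_mid _ _ _ hpt.1.symm
        · exact h j hjn (by rw [hpt])
      · simp only at h; omega
  have hsame' : ∀ s, s < Q.length → (∀ r, r ≤ n → s = f r → pt q1 r = pt q r) →
      pt Q1 s = pt Q s := by
    intro s hs h
    by_cases hc : ∃ r, r ≤ n ∧ s = f r
    · obtain ⟨r, hr, rfl⟩ := hc
      rw [hE1 r hr, hE.pts r hr, h r hr rfl]
    · push Not at hc
      exact hsame s hs hc
  rcases hm with ⟨rfl, rfl, rfl, rfl⟩ | ⟨hj1, hjn, rfl, hd, hu, hz1e⟩ | ⟨hj1, hjn, rfl, rfl, hd, hz1e⟩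
  · have hqn := hz.ptn
    have hq1n := hz1.ptn
    have hcol : ∀ v, (2 * (j : ℝ) - 1, v) ∈ Q → v = (z1 (j - 1) : ℝ) - 1 - ε ∨
        v < (z1 (j - 1) : ℝ) - 1 - ε ∨ (z1 (j - 1) : ℝ) + 1 + ε ≤ v := by
      intro v hv
      obtain ⟨s, hs, hsv⟩ := mem_pt hv
      by_cases hc : ∃ r, r ≤ j ∧ s = f r
      · obtain ⟨r, hr, rfl⟩ := hc
        rw [hE.pts r hr] at hsv
        rcases hr.lt_or_eq with hr | rfl
        · rw [hz.pts r hr, Prod.mk.injEq] at hsv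
          exact absurd hsv.1 (xc_ne_mid _ _ _)
        · rw [hqn, Prod.mk.injEq] at hsv
          left; rw [← hsv.2]; push_cast; ring
      · push Not at hc
        have := hmid rfl s hs hc (by rw [hsv])
        rw [hsv, hqn, hq1n] at this
        simp only at this
        push_cast at this
        rcases this with h | h
        · right; left; linarith
        · right; right; linarith
    have hp := hpar (j - 1) (by omega)
    have hrr : rr (.B j ε) j = 1 := by simp [rr]
    have hX : (j, z1 (j - 1) - 1) ∈ XB j := Or.inl ⟨rfl, by simp only; omega⟩
    refine ⟨z1 (j - 1), ?_, hQ, hQ1, ⟨?_, ?_⟩, ?_⟩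
    · simp only [W, Set.mem_ofPred_eq, hrr, X]
      exact_mod_cast hX
    · rw [hrr]
      refine ⟨by exact_mod_cast hX, Or.inr ⟨rfl, ?_⟩⟩
      rw [if_pos rfl]
      constructor
      · have := pt_mem (hE.lt j le_rfl)
        rw [hE.pts j le_rfl, hqn] at this
        convert this using 2
        push_cast; ring
      · intro h
        have := hcol _ h
        push_cast at this
        rcases this with h | h | h <;> linarith
    · rw [hrr]
      rintro ⟨_, ⟨r, _, _, _, _, h, _⟩ | ⟨_, h⟩⟩
      · exact h (by simp [iotaB])
      · rw [if_pos rfl] at h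
        have := hcol _ h.1
        push_cast at this
        rcases this with h | h | h <;> linarith
    · simp only [if_true]
      refine ⟨f j, hE.lt j le_rfl, ?_, hlen, ?_, ?_⟩
      · rw [hE.pts j le_rfl, hqn]; push_cast; congr 1; ring
      · rw [hE1 j le_rfl, hq1n]; push_cast; congr 1; ring
      · intro s hs hne
        apply hsame' s hs
        rintro r hr rfl
        have hr' : r < j := lt_of_le_of_ne hr (fun h => hne (by rw [h]))
        rw [hz.pts r hr', hz1.pts r hr']
  · have hp := hpar j (by omega)
    obtain ⟨hW, hc⟩ := hcan hj1 (by omega) hd (by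
      rw [hz.pts j (by omega), hz.pts (j + 1) (by omega), hu]; push_cast; linarith)
    refine ⟨_, hW, hQ, hQ1, hc, ?_⟩
    simp only
    rw [if_neg (by omega), if_neg (by omega), show z j + 2 - 2 = z j by ring,
      iota_eq hl (by omega) hp]
    refine ⟨f j, hE.lt j (by omega), ?_, hlen, ?_, ?_⟩
    · rw [hE.pts j (by omega), hz.pts j (by omega)]; push_cast; congr 1; ring
    · rw [hE1 j (by omega), hz1.pts j (by omega), hz1e]; simp only [if_true]; push_cast
      congr 1; ring
    · intro s hs hne
      apply hsame' s hs
      rintro r hr rfl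
      have hrj : r ≠ j := fun h => hne (by rw [h])
      rcases hr.lt_or_eq with hr | rfl
      · rw [hz.pts r hr, hz1.pts r hr, hz1e]; simp only [if_neg hrj]
      · rw [hz.ptn, hz1.ptn, hz1e]; simp only [if_neg (show r - 1 ≠ j by omega)]
  · have hp := hpar j (by omega)
    have hjn' : n - 1 = j := by omega
    have hqn := hz.ptn
    have hq1n := hz1.ptn
    rw [hjn'] at hqn hq1n
    obtain ⟨hW, hc⟩ := hcan hj1 (by omega) hd (by
      rw [hz.pts j (by omega), hjn, hqn]; push_cast; linarith)
    refine ⟨_, hW, hQ, hQ1, hc, ?_⟩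
    simp only
    rw [if_neg (by omega), if_pos (by omega), show z j + 2 - 2 = z j by ring,
      iota_eq hl (by omega) hp]
    refine ⟨f j, f n, hE.lt j (by omega), hE.lt n le_rfl, ?_, ?_, ?_, hlen, ?_, ?_, ?_⟩
    · intro h
      have := hE.inj j n (by omega) le_rfl h
      omega
    · rw [hE.pts j (by omega), hz.pts j (by omega)]; push_cast; congr 1; ring
    · rw [hE.pts n le_rfl, hqn]; push_cast; congr 1; ring
    · rw [hE1 j (by omega), hz1.pts j (by omega), hz1e]; simp only [if_true]; push_cast
      congr 1; ring
    · rw [hE1 n le_rfl, hq1n, hz1e]; simp only [if_true]; push_cast; congr 1; ring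
    · intro s hs hne hne'
      apply hsame' s hs
      rintro r hr rfl
      have hrj : r ≠ j := fun h => hne (by rw [h])
      have hrn : r ≠ n := fun h => hne' (by rw [h])
      have hr' : r < n := by omega
      rw [hz.pts r hr', hz1.pts r hr', hz1e]; simp only [if_neg hrj]

theorem goodBspin {n : ℕ} {ε : ℝ} (hn : 2 ≤ n) (h0 : 0 < ε) (h1 : ε < 1 / 2) {k : ℤ}
    (hk : k % 2 = 1) : Good (.B n ε) n k := by
  have hP : P (.B n ε) n k = pathsBspin n ε k := by simp [P, pathsB]
  have hP' : pathsB n ε n k = pathsBspin n ε k := by simp [pathsB]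
  constructor
  · rw [hP]
    exact fun p hp q hq => hp.1.trans hq.1.symm
  · rw [hP]
    intro p hp q hq r hr
    obtain ⟨z, e, hz⟩ := ZB.of hn hp
    obtain ⟨y, f, hy⟩ := ZB.of hn hq
    rw [hz.len] at hr
    rcases (Nat.lt_succ_iff.1 hr).lt_or_eq with hr | rfl
    · rw [hz.pts r hr, hy.pts r hr]
    · rw [hz.ptn, hy.ptn]
  · rw [hP]
    intro p hp r s hrs hs hx
    obtain ⟨z, e, hz⟩ := ZB.of hn hp
    rw [hz.len] at hs
    exfalso
    rw [hz.pts r (by omega)] at hx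
    rcases (Nat.lt_succ_iff.1 hs).lt_or_eq with hs | rfl
    · rw [hz.pts s hs] at hx
      have := xc_inj hx
      omega
    · rw [hz.ptn] at hx
      exact xc_ne_mid _ _ _ hx
  · rw [hP]
    intro p hp q hq
    obtain ⟨z, e, hz⟩ := ZB.of hn hp
    obtain ⟨y, f, hy⟩ := ZB.of hn hq
    obtain ⟨x, g, h⟩ := hz.top hn h0 h1 hy
    exact h.mem hn
  · rw [hP]
    intro q hq p hp hle hne
    obtain ⟨z, e, hz⟩ := ZB.of hn hq
    obtain ⟨y, f, hy⟩ := ZB.of hn hp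
    have hzl := (hz.le_iff hn h0 h1 hy).2 (fun r hr => hle.2 r (by rw [hz.len]; omega))
    obtain ⟨z1, e1, j, hok, hle1, hm⟩ := zstep hn hz.ok hy.ok hzl (fun h => hne (hz.ext hn hy h))
    obtain ⟨q1, hq1⟩ := ZB.mk_exists ε hok
    have himg : ∀ s, s < q.length → (∀ r, r ≤ n → s ≠ id r) → False := fun s hs h =>
      h s (by rw [hz.len] at hs; omega) rfl
    have hE : Emb n k q q id := by
      refine ⟨fun r hr => by rw [hz.len]; exact Nat.lt_succ_of_le hr, fun r s _ _ h => h,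
        fun r _ => rfl, fun r hr _ => Or.inl ⟨?_, rfl⟩, fun s hs => Or.inl ⟨s, ?_, rfl⟩⟩
      · simp only [id]; omega
      · rw [hz.len] at hs; omega
    obtain ⟨L, hW, hL⟩ := lift_move hn h0 h1 hk (i := n) (k := k) (hP'.symm ▸ hq)
      (hP'.symm ▸ hq1.mem hn) hE
      (fun r _ => rfl) (hq1.len.trans hz.len.symm)
      (fun s hs h => (himg s hs h).elim) hz hq1 hm (fun _ s hs h => (himg s hs h).elim)
    refine ⟨q1, j, L, hW, hL, hq1.len.trans hy.len.symm, fun r hr => ?_⟩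
    rw [hq1.len] at hr
    exact (hq1.le_iff hn h0 h1 hy).1 hle1 r (by omega)

theorem pt_left {n : ℕ} {a : List (ℝ × ℝ)} (b : List (ℝ × ℝ)) (ha : a.length = n + 1) {r : ℕ}
    (hr : r ≤ n) : pt (a ++ b.reverse) r = pt a r :=
  pt_append_left (by omega)

theorem pt_right {n : ℕ} {a b : List (ℝ × ℝ)} (ha : a.length = n + 1) (hb : b.length = n + 1)
    {r : ℕ} (hr : r ≤ n) : pt (a ++ b.reverse) (2 * n + 1 - r) = pt b r := by
  have := pt_append_rev (a := a) (b := b) (r := r) (by omega)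
  rwa [ha, hb, show n + 1 + (n + 1) - 1 - r = 2 * n + 1 - r by omega] at this

theorem top_append {n : ℕ} {a b a' b' : List (ℝ × ℝ)} (ha : a.length = n + 1)
    (hb : b.length = n + 1) (ha' : a'.length = n + 1) (hb' : b'.length = n + 1) :
    topPath (a ++ b.reverse) (a' ++ b'.reverse) = topPath a a' ++ (topPath b b').reverse := by
  have la : (topPath a a').length = n + 1 := by rw [length_top (by omega), ha]
  have lb : (topPath b b').length = n + 1 := by rw [length_top (by omega), hb]
  have hL : (a ++ b.reverse).length = (a' ++ b'.reverse).length := by simp; omega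
  have hL' : (a ++ b.reverse).length = 2 * n + 2 := by simp; omega
  apply pt_ext
  · rw [length_top hL]; simp; omega
  · intro r hr
    rw [length_top hL] at hr
    rw [pt_top hL hr]
    rw [hL'] at hr
    by_cases h : r ≤ n
    · rw [pt_left _ ha h, pt_left _ ha' h, pt_left _ la h, pt_top (by omega) (by omega)]
    · obtain ⟨s, hs, rfl⟩ : ∃ s, s ≤ n ∧ r = 2 * n + 1 - s := ⟨2 * n + 1 - r, by omega, by omega⟩
      rw [pt_right ha hb hs, pt_right ha' hb' hs, pt_right la lb hs, pt_top (by omega) (by omega)]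

theorem goodBfull {n : ℕ} {ε : ℝ} (hn : 2 ≤ n) (h0 : 0 < ε) (h1 : ε < 1 / 2) {i : ℕ} {k : ℤ}
    (hi : i < n) (hk : k % 2 = 0) : Good (.B n ε) i k := by
  set l1 : ℤ := k - (2 * (n : ℤ) - 2 * (i : ℤ) - 1) with hl1
  set l2 : ℤ := k + (2 * (n : ℤ) - 2 * (i : ℤ) - 1) with hl2
  have o1 : l1 % 2 = 1 := by omega
  have o2 : l2 % 2 = 1 := by omega
  have o12 : l1 % 4 ≠ l2 % 4 := by omega
  have hof : ∀ Q ∈ P (.B n ε) i k, ∃ a b z e y f, ZB n ε l1 a z e ∧ ZB n ε l2 b y f ∧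
      Q = a ++ b.reverse ∧ (pt b n).2 < (pt a n).2 := by
    intro Q hQ
    simp only [P, pathsB, if_neg hi.ne] at hQ
    obtain ⟨a, b, ha, hb, hab, _, h⟩ := hQ
    obtain ⟨z, e, hz⟩ := ZB.of hn ha
    obtain ⟨y, f, hy⟩ := ZB.of hn hb
    exact ⟨a, b, z, e, y, f, hz, hy, hab, by linarith⟩
  have hmk : ∀ a b z e y f, ZB n ε l1 a z e → ZB n ε l2 b y f → (pt b n).2 < (pt a n).2 →
      a ++ b.reverse ∈ pathsB n ε i k := by
    intro a b z e y f ha hb hab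
    simp only [pathsB, if_neg hi.ne]
    exact ⟨a, b, ha.mem hn, hb.mem hn, rfl, by rw [ha.ptn, hb.ptn], by linarith⟩
  have hlen : ∀ {a b : List (ℝ × ℝ)}, a.length = n + 1 → b.length = n + 1 →
      (a ++ b.reverse).length = 2 * n + 2 := by
    intro a b ha hb; simp; omega
  have hspl : ∀ r, r < 2 * n + 2 → r ≤ n ∨ ∃ s, s ≤ n ∧ r = 2 * n + 1 - s := by
    intro r hr
    by_cases h : r ≤ n
    · exact Or.inl h
    · exact Or.inr ⟨2 * n + 1 - r, by omega, by omega⟩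
  have hxs : ∀ {l : ℤ} {p q : List (ℝ × ℝ)} {z y : ℕ → ℤ} {e f : ℤ}, ZB n ε l p z e →
      ZB n ε l q y f → ∀ r, r ≤ n → (pt p r).1 = (pt q r).1 := by
    intro l p q z y e f hz hy r hr
    rcases hr.lt_or_eq with hr | rfl
    · rw [hz.pts r hr, hy.pts r hr]
    · rw [hz.ptn, hy.ptn]
  have hxne : ∀ {l : ℤ} {p : List (ℝ × ℝ)} {z : ℕ → ℤ} {e : ℤ}, ZB n ε l p z e →
      ∀ r s, r < s → s ≤ n → (pt p r).1 ≠ (pt p s).1 := by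
    intro l p z e hz r s hrs hs hx
    rw [hz.pts r (by omega)] at hx
    rcases hs.lt_or_eq with hs | rfl
    · rw [hz.pts s hs] at hx
      have := xc_inj hx
      omega
    · rw [hz.ptn] at hx
      exact xc_ne_mid _ _ _ hx
  have hxd : ∀ {l l' : ℤ} {p p' : List (ℝ × ℝ)} {z z' : ℕ → ℤ} {e e' : ℤ}, ZB n ε l p z e →
      ZB n ε l' p' z' e' → l % 2 = 1 → l' % 2 = 1 → l % 4 ≠ l' % 4 →
      ∀ r s, r ≤ n → s < n → (pt p r).1 ≠ (xc n l' s : ℝ) := by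
    intro l l' p p' z z' e e' hz hz' a1 a2 a3 r s hr hs
    rcases hr.lt_or_eq with hr | rfl
    · rw [hz.pts r hr]
      exact xc_disj a1 a2 a3 hr hs
    · rw [hz.ptn]
      exact (xc_ne_mid _ _ _).symm
  constructor
  · intro p hp q hq
    obtain ⟨a, b, z, e, y, f, ha, hb, rfl, hab⟩ := hof p hp
    obtain ⟨a', b', z', e', y', f', ha', hb', rfl, hab'⟩ := hof q hq
    rw [hlen ha.len hb.len, hlen ha'.len hb'.len]
  · intro p hp q hq r hr
    obtain ⟨a, b, z, e, y, f, ha, hb, rfl, hab⟩ := hof p hp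
    obtain ⟨a', b', z', e', y', f', ha', hb', rfl, hab'⟩ := hof q hq
    rw [hlen ha.len hb.len] at hr
    rcases hspl r hr with h | ⟨s, hs, rfl⟩
    · rw [pt_left _ ha.len h, pt_left _ ha'.len h]
      exact hxs ha ha' r h
    · rw [pt_right ha.len hb.len hs, pt_right ha'.len hb'.len hs]
      exact hxs hb hb' s hs
  · intro p hp r s hrs hs hx
    obtain ⟨a, b, z, e, y, f, ha, hb, rfl, hab⟩ := hof p hp
    rw [hlen ha.len hb.len] at hs
    rcases hspl r (by omega) with h | ⟨r', hr', rfl⟩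
    · rcases hspl s hs with h' | ⟨s', hs', rfl⟩
      · rw [pt_left _ ha.len h, pt_left _ ha.len h'] at hx
        exact absurd hx (hxne ha r s hrs h')
      · rw [pt_left _ ha.len h, pt_right ha.len hb.len hs'] at hx ⊢
        rcases hs'.lt_or_eq with hs' | rfl
        · rw [hb.pts s' hs'] at hx
          exact absurd hx (hxd ha hb o1 o2 o12 r s' h hs')
        · rcases h.lt_or_eq with h | rfl
          · rw [ha.pts r h, hb.ptn] at hx
            exact absurd hx (xc_ne_mid _ _ _)
          · exact hab
    · rcases hspl s hs with h' | ⟨s', hs', rfl⟩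
      · omega
      · rw [pt_right ha.len hb.len hr', pt_right ha.len hb.len hs'] at hx
        exact absurd hx.symm (hxne hb s' r' (by omega) hr')
  · intro p hp q hq
    obtain ⟨a, b, z, e, y, f, ha, hb, rfl, hab⟩ := hof p hp
    obtain ⟨a', b', z', e', y', f', ha', hb', rfl, hab'⟩ := hof q hq
    rw [top_append ha.len hb.len ha'.len hb'.len]
    obtain ⟨_, _, hA⟩ := ha.top hn h0 h1 ha'
    obtain ⟨_, _, hB⟩ := hb.top hn h0 h1 hb'
    refine hmk _ _ _ _ _ _ hA hB ?_
    rw [pt_top (hb.len.trans hb'.len.symm) (by rw [hb.len]; omega),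
      pt_top (ha.len.trans ha'.len.symm) (by rw [ha.len]; omega)]
    exact min_lt_min hab hab'
  · intro q hq p hp hle hne
    obtain ⟨a, b, z, e, y, f, ha, hb, rfl, hab⟩ := hof q hq
    obtain ⟨a', b', z', e', y', f', ha', hb', rfl, hab'⟩ := hof p hp
    have hlq := hlen ha.len hb.len
    have hlea : ∀ r, r ≤ n → (pt a r).2 ≤ (pt a' r).2 := by
      intro r hr
      have := hle.2 r (by omega)
      rwa [pt_left _ ha.len hr, pt_left _ ha'.len hr] at this
    have hleb : ∀ r, r ≤ n → (pt b r).2 ≤ (pt b' r).2 := by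
      intro r hr
      have := hle.2 (2 * n + 1 - r) (by omega)
      rwa [pt_right ha.len hb.len hr, pt_right ha'.len hb'.len hr] at this
    by_cases haa : a = a'
    · have hbb : b ≠ b' := by
        rintro rfl
        exact hne (by rw [haa])
      obtain ⟨z1, e1, j, hok, hle1, hm⟩ := zstep hn hb.ok hb'.ok
        ((hb.le_iff hn h0 h1 hb').2 hleb) (fun h => hbb (hb.ext hn hb' h))
      obtain ⟨b1, hb1⟩ := ZB.mk_exists ε hok
      have hle1' := (hb1.le_iff hn h0 h1 hb').1 hle1
      have hord : (pt b1 n).2 < (pt a n).2 := by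
        rw [haa]; exact lt_of_le_of_lt (hle1' n le_rfl) hab'
      have hQ1 := hmk _ _ _ _ _ _ ha hb1 hord
      have hE : Emb n l2 b (a ++ b.reverse) (fun r => 2 * n + 1 - r) := by
        refine ⟨fun r hr => by omega, fun r s _ _ h => by omega,
          fun r hr => pt_right ha.len hb.len hr, fun r hr hr' => Or.inr ⟨?_, ?_⟩, fun s hs => ?_⟩
        · omega
        · omega
        · rcases hspl s (by omega) with h | h
          · right
            intro r hr
            rw [pt_left _ ha.len h]
            exact hxd ha hb o1 o2 o12 s r h hr
          · left; exact h
      have hside : ∀ s, s < (a ++ b.reverse).length → (∀ r, r ≤ n → s ≠ 2 * n + 1 - r) → s ≤ n := by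
        intro s hs h
        rcases hspl s (by omega) with h' | ⟨r, hr, h'⟩
        · exact h'
        · exact absurd h' (h r hr)
      obtain ⟨L, hW, hL⟩ := lift_move hn h0 h1 o2 hq hQ1 hE
        (fun r hr => pt_right ha.len hb1.len hr)
        ((hlen ha.len hb1.len).trans hlq.symm)
        (fun s hs h => by
          have := hside s hs h
          rw [pt_left _ ha.len this, pt_left _ ha.len this]) hb hb1 hm
        (fun _ s hs h hx => by
          have hsn := hside s hs h
          rw [pt_left _ ha.len hsn] at hx ⊢
          rcases hsn.lt_or_eq with hsn | rfl
          · rw [ha.pts s hsn] at hx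
            exact absurd hx (xc_ne_mid _ _ _)
          · right; exact hord.le)
      refine ⟨_, j, L, hW, hL, (hlen ha.len hb1.len).trans (hlen ha'.len hb'.len).symm,
        fun r hr => ?_⟩
      rw [hlen ha.len hb1.len] at hr
      rcases hspl r hr with h | ⟨s, hs, rfl⟩
      · rw [pt_left _ ha.len h, pt_left _ ha'.len h]
        exact hlea r h
      · rw [pt_right ha.len hb1.len hs, pt_right ha'.len hb'.len hs]
        exact hle1' s hs
    · obtain ⟨z1, e1, j, hok, hle1, hm⟩ := zstep hn ha.ok ha'.ok
        ((ha.le_iff hn h0 h1 ha').2 hlea) (fun h => haa (ha.ext hn ha' h))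
      obtain ⟨a1, ha1⟩ := ZB.mk_exists ε hok
      have hle1' := (ha1.le_iff hn h0 h1 ha').1 hle1
      have hmono : (pt a n).2 ≤ (pt a1 n).2 := by
        rw [ha.ptn, ha1.ptn]
        simp only
        rcases hm with ⟨_, rfl, rfl, rfl⟩ | ⟨_, hj, rfl, _, _, rfl⟩ | ⟨_, hj, rfl, rfl, _, rfl⟩
        · push_cast; linarith
        · beta_reduce; rw [if_neg (by omega)]
        · beta_reduce; rw [if_pos (by omega), show n - 1 = j by omega]; push_cast; linarith
      have hord : (pt b n).2 < (pt a1 n).2 := lt_of_lt_of_le hab hmono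
      have hQ1 := hmk _ _ _ _ _ _ ha1 hb hord
      have hE : Emb n l1 a (a ++ b.reverse) id := by
        refine ⟨fun r hr => by simp only [id]; omega, fun r s _ _ h => h,
          fun r hr => pt_left _ ha.len hr, fun r hr hr' => Or.inl ⟨?_, rfl⟩, fun s hs => ?_⟩
        · simp only [id]; omega
        · rcases hspl s (by omega) with h | ⟨r', h, rfl⟩
          · left; exact ⟨s, h, rfl⟩
          · right
            intro r hr
            rw [pt_right ha.len hb.len h]
            exact hxd hb ha o2 o1 o12.symm r' r h hr
      have hside : ∀ s, s < (a ++ b.reverse).length → (∀ r, r ≤ n → s ≠ id r) →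
          ∃ r, r ≤ n ∧ s = 2 * n + 1 - r := by
        intro s hs h
        rcases hspl s (by omega) with h' | h'
        · exact absurd rfl (h s h')
        · exact h'
      obtain ⟨L, hW, hL⟩ := lift_move hn h0 h1 o1 hq hQ1 hE
        (fun r hr => pt_left _ ha1.len hr)
        ((hlen ha1.len hb.len).trans hlq.symm)
        (fun s hs h => by
          obtain ⟨r, hr, rfl⟩ := hside s hs h
          rw [pt_right ha.len hb.len hr, pt_right ha1.len hb.len hr]) ha ha1 hm
        (fun _ s hs h hx => by
          obtain ⟨r, hr, rfl⟩ := hside s hs h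
          rw [pt_right ha.len hb.len hr] at hx ⊢
          rcases hr.lt_or_eq with hr | rfl
          · rw [hb.pts r hr] at hx
            exact absurd hx (xc_ne_mid _ _ _)
          · left; exact hab)
      refine ⟨_, j, L, hW, hL, (hlen ha1.len hb.len).trans (hlen ha'.len hb'.len).symm,
        fun r hr => ?_⟩
      rw [hlen ha1.len hb.len] at hr
      rcases hspl r hr with h | ⟨s, hs, rfl⟩
      · rw [pt_left _ ha1.len h, pt_left _ ha'.len h]
        exact hle1' r h
      · rw [pt_right ha1.len hb.len hs, pt_right ha'.len hb'.len hs]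
        exact hleb s hs

theorem good_all {S : Setting} (hS : S.valid) {ik : ℕ × ℤ} (h : ik ∈ X S) :
    Good S ik.1 ik.2 := by
  obtain ⟨i, k⟩ := ik
  cases S with
  | A n => exact goodA h
  | B n ε =>
    obtain ⟨hn, h0, h1⟩ := hS
    rcases h with ⟨h, hk⟩ | ⟨_, hi, hk⟩
    · simp only at h hk
      subst h
      exact goodBspin hn h0 h1 hk
    · exact goodBfull hn h0 h1 hi hk

/-- any two non-overlapping tuples in `𝒫̄` are connected by a finite sequence
of raising and lowering moves at points of `W`, containing no inverse pair of moves (no site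
occurs both for a raising and for a lowering move), all of whose intermediate tuples are
non-overlapping. -/
theorem stmt9 (S : Setting) (hS : S.valid) {T : ℕ} (hT : 1 ≤ T)
    (w : Fin T → ℕ × ℤ) (hw : IsSnake S w)
    (ps ps' : Fin T → List (ℝ × ℝ)) (hps : ps ∈ PBar S w) (hps' : ps' ∈ PBar S w) :
    ∃ ms : List (Bool × (ℕ × ℤ)), TMoveSeq S w ps' ps ms ∧
      ∀ jl : ℕ × ℤ, ¬((true, jl) ∈ ms ∧ (false, jl) ∈ ms) := by
  exact main_of_good hS (fun t => good_all hS (hw.1 t)) ps ps' hps hps'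

end Paper
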